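/- arXiv:math/0610206 — 2 statements merged into one kernel-verified Lean document; each statement's English description precedes it below -/
import Mathlib

section
/- Fix an integer k ≥ 1. Let U^{(2),k}_0(Ω∞) be the set of functions Ω∞° → ℝ³ of the form u(x,y,z) = (z^{k−1}/(1+z)^{k+2})·( 2t, 2s, (1+z)(∂s/∂y + ∂t/∂x) ) + ( x(1−x)·χ₁, y(1−y)·χ₂, z·χ₃ ), where s = y(1−y)σ(x,y) with σ ∈ Q^{k−1,k−2}[x,y], t = x(1−x)τ(x,y) with τ ∈ Q^{k−2,k−1}[x,y], χ₁ ∈ Q^{k−2,k−1,k−2}_{k+2}, χ₂ ∈ Q^{k−1,k−2,k−2}_{k+2}, χ₃ ∈ Q^{k−1,k−1,k−2}_{k+2}. Then every u ∈ U^{(2),k}_0(Ω∞) can be written, uniquely, as u = curl w₁ + w₂ on Ω∞°, where w₁ ∈ U^{(1),k}_{0,curl}(Ω∞) and w₂ ∈ U^{(2),k}_{0,div}(Ω∞). -/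
/-!
Write `k = m + 1`, `Eᵢ p = ∂ᵢ(Xᵢ (1 - Xᵢ) p)` and `D p = (1 + z) ∂_z(z p) - (m + 2) z p`. After
clearing the denominator `(1 + z) ^ (m + 3)` and cancelling the bubbles `x (1 - x)` and
`y (1 - y)`, the first two components of `u = curl w₁ + w₂` read, with `P` the datum `p` of `w₂`,

* `2 z ^ m τ + N₁ = (1 + z) E₁ ρ - D p₂ + z ^ m (E₁ P + 2 t)`,
* `2 z ^ m σ + N₂ = D p₁ - (1 + z) E₀ ρ + z ^ m (E₀ P + 2 s)`.

On monomials `D` and `Eᵢ` are bidiagonal in one exponent, with nonvanishing coefficients in the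
relevant range. Hence polynomials of degree at most `m` in `z` are uniquely `D q + z ^ m r` with
`deg_z q < m` and `r` free of `z`, and `r` is in turn uniquely `Eᵢ g` plus a polynomial free of
`Xᵢ`. A polynomial `Q` with `D Q = 1 + z - (m + 2) z ^ m` trades `(1 + z) Eᵢ ρ` for
`(m + 2) z ^ m Eᵢ ρ`, so the two equations determine `P + (m + 2) ρ` and `P - (m + 2) ρ`
independently, and with them all data except `χ`.

The third equation merely defines `χ`, once its discrepancy is known to be `z` times a polynomial
of degree less than `m` in `z`. Up to the factor `1 + z` this discrepancy is `z (Y + z ^ (m - 1) F)`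
with `deg_z Y < m` and `F` free of `z`. Since a curl is divergence free, the first two equations
give `deg_z D (Y + z ^ (m - 1) F) < m`; as `D` maps `z ^ (m - 1)` to `m z ^ (m - 1) - 2 z ^ m`,
this forces `deg_z (Y + z ^ (m - 1) F) < m - 1`, which leaves room for the factor `1 + z`.
-/

noncomputable section

/-- The interior `Ω∞° = (0,1) × (0,1) × (0,∞)` of the infinite pyramid. -/
def PyrInfInt : Set (ℝ × ℝ × ℝ) :=
  {p | 0 < p.1 ∧ p.1 < 1 ∧ 0 < p.2.1 ∧ p.2.1 < 1 ∧ 0 < p.2.2}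

/-- The weighted monomial `x^a y^b z^c / (1+z)^k`. -/
def qmon (k a b c : ℕ) : ℝ × ℝ × ℝ → ℝ :=
  fun p => p.1 ^ a * p.2.1 ^ b * p.2.2 ^ c / (1 + p.2.2) ^ k

/-- The space `Q^{l,m,n}_k`. -/
def Qsp (l m n : ℤ) (k : ℕ) : Submodule ℝ ((ℝ × ℝ × ℝ) → ℝ) :=
  Submodule.span ℝ
    {f | ∃ a b c : ℕ, (a : ℤ) ≤ l ∧ (b : ℤ) ≤ m ∧ (c : ℤ) ≤ n ∧ f = qmon k a b c}

/-- Partial derivative in `x`. -/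
def pdx (f : ℝ × ℝ × ℝ → ℝ) (p : ℝ × ℝ × ℝ) : ℝ := fderiv ℝ f p ((1 : ℝ), (0 : ℝ), (0 : ℝ))

/-- Partial derivative in `y`. -/
def pdy (f : ℝ × ℝ × ℝ → ℝ) (p : ℝ × ℝ × ℝ) : ℝ := fderiv ℝ f p ((0 : ℝ), (1 : ℝ), (0 : ℝ))

/-- Partial derivative in `z`. -/
def pdz (f : ℝ × ℝ × ℝ → ℝ) (p : ℝ × ℝ × ℝ) : ℝ := fderiv ℝ f p ((0 : ℝ), (0 : ℝ), (1 : ℝ))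

/-- The curl of a vector field at a point. -/
def curl3 (f : ℝ × ℝ × ℝ → ℝ × ℝ × ℝ) (p : ℝ × ℝ × ℝ) : ℝ × ℝ × ℝ :=
  (pdy (fun q => (f q).2.2) p - pdz (fun q => (f q).2.1) p,
   pdz (fun q => (f q).1) p - pdx (fun q => (f q).2.2) p,
   pdx (fun q => (f q).2.1) p - pdy (fun q => (f q).1) p)

/-- The generic element of `U^{(1),k}_{0,curl}(Ω∞)`. -/
def U1curlFun (k : ℕ) (p₁ p₂ : MvPolynomial (Fin 3) ℝ) (ρ : MvPolynomial (Fin 2) ℝ) :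
    ℝ × ℝ × ℝ → ℝ × ℝ × ℝ :=
  fun p =>
    ((p.2.1 * (1 - p.2.1) * p.2.2 * MvPolynomial.eval ![p.1, p.2.1, p.2.2] p₁) /
        (1 + p.2.2) ^ (k + 1),
     (p.1 * (1 - p.1) * p.2.2 * MvPolynomial.eval ![p.1, p.2.1, p.2.2] p₂) /
        (1 + p.2.2) ^ (k + 1),
     (p.1 * (1 - p.1) * p.2.1 * (1 - p.2.1) * MvPolynomial.eval ![p.1, p.2.1] ρ) /
        (1 + p.2.2) ^ (k + 1))

/-- Degree constraints for `U^{(1),k}_{0,curl}(Ω∞)` (bounds in `ℤ`). -/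
def U1curlBounds (k : ℕ) (p₁ p₂ : MvPolynomial (Fin 3) ℝ)
    (ρ : MvPolynomial (Fin 2) ℝ) : Prop :=
  (∀ d ∈ p₁.support,
    (d 0 : ℤ) ≤ (k : ℤ) - 1 ∧ (d 1 : ℤ) ≤ (k : ℤ) - 2 ∧ (d 2 : ℤ) ≤ (k : ℤ) - 2) ∧
  (∀ d ∈ p₂.support,
    (d 0 : ℤ) ≤ (k : ℤ) - 2 ∧ (d 1 : ℤ) ≤ (k : ℤ) - 1 ∧ (d 2 : ℤ) ≤ (k : ℤ) - 2) ∧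
  (∀ d ∈ ρ.support, (d 0 : ℤ) ≤ (k : ℤ) - 2 ∧ (d 1 : ℤ) ≤ (k : ℤ) - 2)

/-- `x(1−x)y(1−y)·p` as a polynomial in two variables. -/
def bub2 (p : MvPolynomial (Fin 2) ℝ) : MvPolynomial (Fin 2) ℝ :=
  MvPolynomial.X 0 * (1 - MvPolynomial.X 0) * MvPolynomial.X 1 * (1 - MvPolynomial.X 1) * p

/-- `x(1−x)·t̃` as a polynomial in one variable. -/
def bub1 (t : Polynomial ℝ) : Polynomial ℝ := Polynomial.X * (1 - Polynomial.X) * t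

/-- The generic element of `U^{(2),k}_{0,div}(Ω∞)`. -/
def U2divFun (k : ℕ) (p : MvPolynomial (Fin 2) ℝ) (t s : Polynomial ℝ)
    (χ : (ℝ × ℝ × ℝ) → ℝ) : ℝ × ℝ × ℝ → ℝ × ℝ × ℝ :=
  fun q =>
    (q.2.2 ^ (k - 1) / (1 + q.2.2) ^ (k + 2)) •
      (MvPolynomial.eval ![q.1, q.2.1] (MvPolynomial.pderiv 1 (bub2 p)) +
         2 * (bub1 t).eval q.1,
       MvPolynomial.eval ![q.1, q.2.1] (MvPolynomial.pderiv 0 (bub2 p)) +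
         2 * (bub1 s).eval q.2.1,
       (1 + q.2.2) *
         (MvPolynomial.eval ![q.1, q.2.1]
            (MvPolynomial.pderiv 0 (MvPolynomial.pderiv 1 (bub2 p))) +
          (Polynomial.derivative (bub1 s)).eval q.2.1 +
          (Polynomial.derivative (bub1 t)).eval q.1)) +
    ((0 : ℝ), (0 : ℝ), q.2.2 * χ q)

/-- Degree constraints for the polynomial data of `U^{(2),k}_{0,div}(Ω∞)`. -/
def U2divBounds (k : ℕ) (p : MvPolynomial (Fin 2) ℝ) (t s : Polynomial ℝ) : Prop :=
  (∀ d ∈ p.support, (d 0 : ℤ) ≤ (k : ℤ) - 2 ∧ (d 1 : ℤ) ≤ (k : ℤ) - 2) ∧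
  (∀ n ∈ t.support, (n : ℤ) ≤ (k : ℤ) - 2) ∧
  (∀ n ∈ s.support, (n : ℤ) ≤ (k : ℤ) - 2)

/-- The generic element of `U^{(2),k}_0(Ω∞)` determined by `σ ∈ Q^{k−1,k−2}[x,y]`,
`τ ∈ Q^{k−2,k−1}[x,y]` and `χ₁, χ₂, χ₃`: with `s = y(1−y)σ`, `t = x(1−x)τ`, the field
`(z^{k−1}/(1+z)^{k+2})·(2t, 2s, (1+z)(s_y + t_x)) + (x(1−x)χ₁, y(1−y)χ₂, z·χ₃)`. -/
def U2zeroFun (k : ℕ) (σ τ : MvPolynomial (Fin 2) ℝ)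
    (χ₁ χ₂ χ₃ : (ℝ × ℝ × ℝ) → ℝ) : ℝ × ℝ × ℝ → ℝ × ℝ × ℝ :=
  fun q =>
    (q.2.2 ^ (k - 1) / (1 + q.2.2) ^ (k + 2)) •
      (2 * MvPolynomial.eval ![q.1, q.2.1]
          (MvPolynomial.X 0 * (1 - MvPolynomial.X 0) * τ),
       2 * MvPolynomial.eval ![q.1, q.2.1]
          (MvPolynomial.X 1 * (1 - MvPolynomial.X 1) * σ),
       (1 + q.2.2) *
         (MvPolynomial.eval ![q.1, q.2.1]
            (MvPolynomial.pderiv 1 (MvPolynomial.X 1 * (1 - MvPolynomial.X 1) * σ)) +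
          MvPolynomial.eval ![q.1, q.2.1]
            (MvPolynomial.pderiv 0 (MvPolynomial.X 0 * (1 - MvPolynomial.X 0) * τ)))) +
    (q.1 * (1 - q.1) * χ₁ q, q.2.1 * (1 - q.2.1) * χ₂ q, q.2.2 * χ₃ q)

open MvPolynomial Function

section Box

variable {ι R : Type*} [CommSemiring R] {b b' : ι → ℕ} {p q : MvPolynomial ι R} {i : ι}

/-- The space of polynomials of degree less than `b i` in `X i` for every `i`. The bounds are
strict, so that `b i = 0` stands for the degree bound `-1` and leaves only the zero polynomial. -/
def boxLT (R : Type*) [CommSemiring R] (b : ι → ℕ) : Submodule R (MvPolynomial ι R) :=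
  restrictSupport R {d | ∀ i, d i < b i}

theorem mem_boxLT : p ∈ boxLT R b ↔ ∀ d ∈ p.support, ∀ i, d i < b i :=
  Iff.rfl

theorem coeff_eq_zero_of_mem_boxLT (hp : p ∈ boxLT R b) {d : ι →₀ ℕ} (hd : b i ≤ d i) :
    coeff d p = 0 :=
  notMem_support_iff.mp fun h => (hp h i).not_ge hd

theorem monomial_mem_boxLT {d : ι →₀ ℕ} (hd : ∀ i, d i < b i) (r : R) :
    monomial d r ∈ boxLT R b := fun _ he =>
  Finset.mem_singleton.mp (support_monomial_subset he) ▸ hd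

theorem boxLT_mono (h : ∀ i, b i ≤ b' i) : boxLT R b ≤ boxLT R b' :=
  restrictSupport_mono R fun _ hd i => (hd i).trans_le (h i)

theorem boxLT_le_iff {S : Submodule R (MvPolynomial ι R)} :
    boxLT R b ≤ S ↔ ∀ d : ι →₀ ℕ, (∀ i, d i < b i) → monomial d 1 ∈ S := by
  rw [boxLT, restrictSupport_eq_span, Submodule.span_le]
  exact Set.image_subset_iff

theorem mul_mem_boxLT {b'' : ι → ℕ} (hp : p ∈ boxLT R b) (hq : q ∈ boxLT R b')
    (h : ∀ i, b i + b' i ≤ b'' i + 1) : p * q ∈ boxLT R b'' := by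
  classical
  intro d hd i
  obtain ⟨e, he, f, hf, rfl⟩ := Finset.mem_add.mp (support_mul p q hd)
  have := hp he i
  have := hq hf i
  have := h i
  rw [Finsupp.add_apply]
  omega

theorem lt_update_iff [DecidableEq ι] {d : ι →₀ ℕ} {n : ℕ} :
    (∀ j, d j < update b i n j) ↔ d i < n ∧ ∀ j ≠ i, d j < b j :=
  forall_update_iff b fun j m => d j < m

theorem exists_eq_add_single {d : ι →₀ ℕ} {n : ℕ} (hd : d i = n + 1) :
    ∃ e : ι →₀ ℕ, e i = n ∧ d = e + Finsupp.single i 1 := by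
  classical
  exact ⟨d - Finsupp.single i 1, by simp [hd], (tsub_add_cancel_of_le (by simp [hd])).symm⟩

theorem eq_zero_of_mem_boxLT (hp : p ∈ boxLT R b) (hb : b i = 0) : p = 0 :=
  MvPolynomial.ext _ _ fun d => by
    simpa using coeff_eq_zero_of_mem_boxLT (d := d) hp (i := i) (by simp [hb])

theorem X_pow_mem_boxLT [DecidableEq ι] (i : ι) {n m : ℕ} (h : n < m) :
    (X i ^ n : MvPolynomial ι R) ∈ boxLT R (update 1 i m) := by
  rw [X_pow_eq_monomial]
  exact monomial_mem_boxLT (lt_update_iff.mpr ⟨by simpa using h, by simp +contextual⟩) _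

theorem X_pow_mul_mem_boxLT [DecidableEq ι] (i : ι) (n : ℕ) (hp : p ∈ boxLT R b) :
    X i ^ n * p ∈ boxLT R (update b i (b i + n)) := by
  refine mul_mem_boxLT (X_pow_mem_boxLT i n.lt_succ_self) hp fun j => ?_
  obtain rfl | hj := eq_or_ne j i
  · simp; omega
  · simp [hj, add_comm]

end Box

section Bidiagonal

variable {ι K : Type*} [Field K] {i j : ι} {α β α' β' : ℕ → K}
  {T S : MvPolynomial ι K →ₗ[K] MvPolynomial ι K} {b : ι → ℕ} {p q r : MvPolynomial ι K}

/-- `T` acts on monomials by `X i ^ c ↦ α c • X i ^ c + β c • X i ^ (c + 1)`, the other variables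
being treated as constants. -/
def IsBidiagonal (i : ι) (α β : ℕ → K) (T : MvPolynomial ι K →ₗ[K] MvPolynomial ι K) : Prop :=
  ∀ (d : ι →₀ ℕ) (r : K),
    T (monomial d r) =
      monomial d (α (d i) * r) + monomial (d + Finsupp.single i 1) (β (d i) * r)

namespace IsBidiagonal

theorem coeff_apply_add_single (hT : IsBidiagonal i α β T) (d : ι →₀ ℕ) (p : MvPolynomial ι K) :
    coeff (d + Finsupp.single i 1) (T p) =
      α (d i + 1) * coeff (d + Finsupp.single i 1) p + β (d i) * coeff d p := by
  classical
  induction p using MvPolynomial.induction_on' with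
  | monomial e r =>
    rw [hT e r]
    by_cases h : e = d
    · simp [h]
    · by_cases h' : e = d + Finsupp.single i 1 <;> simp [coeff_monomial, h, h']
  | add p q hp hq => simp only [map_add, coeff_add, hp, hq]; ring

theorem coeff_apply_of_eq_zero (hT : IsBidiagonal i α β T) {d : ι →₀ ℕ} (hd : d i = 0)
    (p : MvPolynomial ι K) : coeff d (T p) = α 0 * coeff d p := by
  classical
  induction p using MvPolynomial.induction_on' with
  | monomial e r =>
    have h : e + Finsupp.single i 1 ≠ d := fun h => by simp [← h] at hd
    rw [hT e r]
    by_cases h' : e = d <;> simp [coeff_monomial, h, h', hd]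
  | add p q hp hq => simp only [map_add, coeff_add, hp, hq]; ring

theorem comm (hT : IsBidiagonal i α β T) (hS : IsBidiagonal j α' β' S) (hij : i ≠ j)
    (p : MvPolynomial ι K) : T (S p) = S (T p) := by
  induction p using MvPolynomial.induction_on' with
  | monomial d r =>
    simp only [hS d, hT d, map_add, hT _ _, hS _ _, Finsupp.add_apply,
      Finsupp.single_eq_of_ne hij, Finsupp.single_eq_of_ne hij.symm, add_zero,
      mul_left_comm, add_right_comm d]
    abel
  | add p q hp hq => simp only [map_add, hp, hq]

theorem eq_zero_of_add_X_pow_mul_eq_zero (hT : IsBidiagonal i α β T) (hα : ∀ c < b i, α c ≠ 0)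
    (hq : q ∈ boxLT K b) (h : T q + X i ^ b i * r = 0) : q = 0 := by
  suffices ∀ n (d : ι →₀ ℕ), d i = n → coeff d q = 0 from
    MvPolynomial.ext _ _ fun d => by simpa using this _ d rfl
  have hcoeff : ∀ d : ι →₀ ℕ, d i < b i → coeff d (T q) = 0 := fun d hd => by
    rw [eq_neg_of_add_eq_zero_left h, X_pow_eq_monomial, coeff_neg, coeff_monomial_mul', if_neg,
      neg_zero]
    exact fun hle => hd.not_ge (by simpa using hle i)
  intro n
  induction n with
  | zero =>
    intro d hd
    by_cases hb : b i = 0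
    · exact coeff_eq_zero_of_mem_boxLT hq (i := i) (by simp [hb])
    · have := hcoeff d (by omega)
      rw [hT.coeff_apply_of_eq_zero hd] at this
      exact (mul_eq_zero.mp this).resolve_left (hα 0 (by omega))
  | succ n ih =>
    intro d hd
    by_cases hb : b i ≤ d i
    · exact coeff_eq_zero_of_mem_boxLT hq hb
    · obtain ⟨e, rfl, rfl⟩ := exists_eq_add_single hd
      have := hcoeff _ (not_le.mp hb)
      rw [hT.coeff_apply_add_single, ih e rfl, mul_zero, add_zero] at this
      exact (mul_eq_zero.mp this).resolve_left (hα _ (by omega))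

theorem eq_zero_of_add_eq_zero (hT : IsBidiagonal i α β T) (hβ : ∀ c, β c ≠ 0)
    (hr : r ∈ boxLT K b) (hb : b i = 1) (h : T q + r = 0) : q = 0 := by
  suffices ∀ n (d : ι →₀ ℕ), q.degreeOf i < d i + n → coeff d q = 0 from
    MvPolynomial.ext _ _ fun d => by simpa using this (q.degreeOf i + 1) d (by omega)
  intro n
  induction n with
  | zero => exact fun d hd => notMem_support_iff.mp (notMem_support_of_degreeOf_lt i hd)
  | succ n ih =>
    intro d hd
    have hd' := congrArg (coeff (d + Finsupp.single i 1)) h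
    rw [coeff_add, hT.coeff_apply_add_single, ih _ (by simp; omega),
      coeff_eq_zero_of_mem_boxLT hr (i := i) (by simp [hb])] at hd'
    simpa [hβ] using hd'

variable [DecidableEq ι]

theorem apply_mem_boxLT (hT : IsBidiagonal i α β T) (hp : p ∈ boxLT K b) :
    T p ∈ boxLT K (update b i (b i + 1)) := by
  suffices boxLT K b ≤ (boxLT K (update b i (b i + 1))).comap T from this hp
  refine boxLT_le_iff.mpr fun d hd => ?_
  rw [Submodule.mem_comap, hT d]
  refine add_mem (monomial_mem_boxLT (fun j => ?_) _) (monomial_mem_boxLT (fun j => ?_) _) <;>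
    have := hd j <;> obtain rfl | hj := eq_or_ne j i
  · simp; omega
  · simpa [hj]
  · simpa
  · simpa [hj]

theorem exists_eq_apply_add_X_pow_mul (hT : IsBidiagonal i α β T) (hα : ∀ c < b i, α c ≠ 0)
    (hp : p ∈ boxLT K (update b i (b i + 1))) :
    ∃ q ∈ boxLT K b, ∃ r ∈ boxLT K (update b i 1), p = T q + X i ^ b i * r := by
  suffices h : boxLT K (update b i (b i + 1)) ≤
      (boxLT K b).map T ⊔ (boxLT K (update b i 1)).map (LinearMap.mulLeft K (X i ^ b i)) by
    obtain ⟨_, ⟨q, hq, rfl⟩, _, ⟨r, hr, rfl⟩, rfl⟩ := Submodule.mem_sup.mp (h hp)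
    exact ⟨q, hq, r, hr, rfl⟩
  refine boxLT_le_iff.mpr fun d hd => ?_
  obtain ⟨hdi, hdj⟩ := lt_update_iff.mp hd
  clear hd
  induction hn : b i - d i generalizing d with
  | zero =>
    have hdi : b i = d i := by omega
    refine Submodule.mem_sup_right ⟨monomial (d.erase i) 1, ?_, ?_⟩
    · exact monomial_mem_boxLT (lt_update_iff.mpr ⟨by simp, by simpa +contextual⟩) _
    · simp [hdi, X_pow_eq_monomial, Finsupp.single_add_erase]
  | succ n ih =>
    have hα' : α (d i) ≠ 0 := hα _ (by omega)
    have hsucc := ih (d + Finsupp.single i 1) (by simp; omega) (by simpa +contextual)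
      (by simp; omega)
    have hd : monomial d 1 = T (monomial d (α (d i))⁻¹) -
        (β (d i) * (α (d i))⁻¹) • monomial (d + Finsupp.single i 1) 1 := by
      rw [hT d, mul_inv_cancel₀ hα', smul_monomial, smul_eq_mul, mul_one, add_sub_cancel_right]
    rw [hd]
    refine sub_mem (Submodule.mem_sup_left ⟨_, monomial_mem_boxLT (fun j => ?_) _, rfl⟩)
      (Submodule.smul_mem _ _ hsucc)
    obtain rfl | hj := eq_or_ne j i
    · omega
    · exact hdj j hj

theorem exists_eq_apply_add (hT : IsBidiagonal i α β T) (hβ : ∀ c < b i, β c ≠ 0)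
    (hp : p ∈ boxLT K (update b i (b i + 1))) :
    ∃ q ∈ boxLT K b, ∃ r ∈ boxLT K (update b i 1), p = T q + r := by
  suffices h : boxLT K (update b i (b i + 1)) ≤ (boxLT K b).map T ⊔ boxLT K (update b i 1) by
    obtain ⟨_, ⟨q, hq, rfl⟩, r, hr, rfl⟩ := Submodule.mem_sup.mp (h hp)
    exact ⟨q, hq, r, hr, rfl⟩
  refine boxLT_le_iff.mpr fun d hd => ?_
  obtain ⟨hdi, hdj⟩ := lt_update_iff.mp hd
  clear hd
  induction hn : d i generalizing d with
  | zero =>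
    exact Submodule.mem_sup_right (monomial_mem_boxLT (lt_update_iff.mpr ⟨by omega, hdj⟩) _)
  | succ n ih =>
    obtain ⟨e, rfl, rfl⟩ := exists_eq_add_single hn
    have hei : e i < b i := by omega
    have hej : ∀ j ≠ i, e j < b j := fun j hj => by simpa [hj] using hdj j hj
    have hβ' : β (e i) ≠ 0 := hβ _ hei
    have he : monomial (e + Finsupp.single i 1) 1 = T (monomial e (β (e i))⁻¹) -
        (α (e i) * (β (e i))⁻¹) • monomial e 1 := by
      rw [hT e, mul_inv_cancel₀ hβ', smul_monomial, smul_eq_mul, mul_one, add_sub_cancel_left]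
    rw [he]
    refine sub_mem (Submodule.mem_sup_left ⟨_, monomial_mem_boxLT (fun j => ?_) _, rfl⟩)
      (Submodule.smul_mem _ _ (ih e (by omega) hej rfl))
    obtain rfl | hj := eq_or_ne j i
    · exact hei
    · exact hej j hj

theorem mem_boxLT_of_apply_mem {n : ℕ} (hT : IsBidiagonal i α β T) (hβ : β n ≠ 0)
    (hb : b i = n + 1) (hp : p ∈ boxLT K b) (hTp : T p ∈ boxLT K b) :
    p ∈ boxLT K (update b i n) := by
  refine fun d hd => lt_update_iff.mpr ⟨?_, fun j _ => hp hd j⟩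
  by_contra! hn
  have hdi : d i = n := by have := hp hd i; omega
  have h := hT.coeff_apply_add_single d p
  have hvanish {q} (hq : q ∈ boxLT K b) : coeff (d + Finsupp.single i 1) q = 0 :=
    coeff_eq_zero_of_mem_boxLT hq (i := i) (by simp; omega)
  rw [hvanish hTp, hvanish hp, hdi, mul_zero, zero_add] at h
  exact mem_support_iff.mp hd ((mul_eq_zero.mp h.symm).resolve_left hβ)

end IsBidiagonal

end Bidiagonal

section Derivatives

variable {ι R : Type*} [CommRing R] {i j : ι} {b : ι → ℕ} {p q : MvPolynomial ι R} {l : ℕ}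

theorem pderiv_eq_zero_of_mem_boxLT (hp : p ∈ boxLT R b) (hb : b i ≤ 1) : pderiv i p = 0 := by
  suffices boxLT R b ≤ LinearMap.ker (pderiv (R := R) i).toLinearMap from this hp
  refine boxLT_le_iff.mpr fun d hd => ?_
  have hdi : d i = 0 := by have := hd i; omega
  simp [hdi]

theorem pderiv_X_mul_monomial (d : ι →₀ ℕ) (r : R) :
    pderiv i (X i * monomial d r) = monomial d ((d i + 1) * r) := by
  simp [X, monomial_mul, pderiv_monomial, mul_comm]

/-- The operator `p ↦ ∂ᵢ(Xᵢ (1 - Xᵢ) p)`: differentiation in `X i` of multiples of the bubble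
function `Xᵢ (1 - Xᵢ)`. -/
def bubbleDeriv (i : ι) : MvPolynomial ι R →ₗ[R] MvPolynomial ι R :=
  (pderiv i).toLinearMap ∘ₗ LinearMap.mulLeft R (X i * (1 - X i))

/-- The numerator of the derivative in `X i` of `Xᵢ p / (1 + Xᵢ) ^ l`, put over the denominator
`(1 + Xᵢ) ^ (l + 1)`. -/
def poleDeriv (i : ι) (l : ℕ) : MvPolynomial ι R →ₗ[R] MvPolynomial ι R :=
  (LinearMap.mulLeft R (1 + X i) ∘ₗ (pderiv i).toLinearMap - (l : R) • LinearMap.id) ∘ₗ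
    LinearMap.mulLeft R (X i)

theorem bubbleDeriv_apply (i : ι) (p : MvPolynomial ι R) :
    bubbleDeriv i p = pderiv i (X i * (1 - X i) * p) := rfl

theorem poleDeriv_apply (i : ι) (l : ℕ) (p : MvPolynomial ι R) :
    poleDeriv i l p = (1 + X i) * pderiv i (X i * p) - (l : MvPolynomial ι R) * (X i * p) := by
  simp [poleDeriv, smul_eq_C_mul]

theorem bubbleDeriv_mul_of_pderiv_left (h : pderiv i p = 0) :
    bubbleDeriv i (p * q) = p * bubbleDeriv i q := by
  rw [bubbleDeriv_apply, mul_left_comm, pderiv_mul, h, zero_mul, zero_add, bubbleDeriv_apply]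

theorem poleDeriv_mul_of_pderiv_right (h : pderiv i q = 0) :
    poleDeriv i l (p * q) = poleDeriv i l p * q := by
  rw [poleDeriv_apply, ← mul_assoc, pderiv_mul, h, poleDeriv_apply]
  ring

theorem poleDeriv_X_pow (i : ι) (l n : ℕ) :
    poleDeriv i l (X i ^ n : MvPolynomial ι R) =
      ((n : MvPolynomial ι R) + 1) * X i ^ n +
        ((n : MvPolynomial ι R) + 1 - (l : MvPolynomial ι R)) * X i ^ (n + 1) := by
  rw [poleDeriv_apply, ← pow_succ', pderiv_pow, pderiv_X_self]
  push_cast [Nat.add_sub_cancel]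
  ring

end Derivatives

section Field

variable {ι K : Type*} [Field K] {i j : ι} {b : ι → ℕ} {Y F q r : MvPolynomial ι K} {m : ℕ}

theorem isBidiagonal_bubbleDeriv (i : ι) :
    IsBidiagonal i (fun c => (c + 1 : K)) (fun c => -(c + 2 : ℕ)) (bubbleDeriv i) := by
  intro d r
  have h : (X i * (1 - X i) * monomial d r : MvPolynomial ι K) =
      X i * monomial d r - X i * monomial (d + Finsupp.single i 1) r := by
    rw [monomial_add_single]; ring
  simp only [bubbleDeriv_apply, h, map_sub, pderiv_X_mul_monomial, ← C_mul_monomial,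
    Finsupp.add_apply, Finsupp.single_eq_same]
  simp only [map_neg, map_add, map_natCast, map_ofNat, map_one,
    Nat.cast_add, Nat.cast_one, Nat.cast_ofNat]
  ring

theorem isBidiagonal_poleDeriv (i : ι) (l : ℕ) :
    IsBidiagonal i (fun c => (c + 1 : K)) (fun c => c + 1 - l) (poleDeriv i l) := by
  intro d r
  simp only [poleDeriv_apply, pderiv_X_mul_monomial, ← C_mul_monomial, monomial_add_single,
    map_add, map_sub, map_natCast, map_one, pow_one]
  ring

theorem bubbleDeriv_mem_boxLT [DecidableEq ι] {b' : ι → ℕ} (hq : q ∈ boxLT K b)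
    (h : ∀ j, update b i (b i + 1) j ≤ b' j) : bubbleDeriv i q ∈ boxLT K b' :=
  boxLT_mono h ((isBidiagonal_bubbleDeriv i).apply_mem_boxLT hq)

theorem bubbleDeriv_comm (hij : i ≠ j) (q : MvPolynomial ι K) :
    bubbleDeriv i (bubbleDeriv j q) = bubbleDeriv j (bubbleDeriv i q) :=
  (isBidiagonal_bubbleDeriv i).comm (isBidiagonal_bubbleDeriv j) hij q

theorem bubbleDeriv_poleDeriv (hij : i ≠ j) (l : ℕ) (q : MvPolynomial ι K) :
    bubbleDeriv i (poleDeriv j l q) = poleDeriv j l (bubbleDeriv i q) :=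
  (isBidiagonal_bubbleDeriv i).comm (isBidiagonal_poleDeriv j l) hij q

/-- The truncated expansion of a solution `q` of `poleDeriv i (m + 2) q = 1 + X i`: the primitive
`((1 + Xᵢ) ^ (m + 2) - (1 + Xᵢ)) / (m + 1)` divided by `X i`, without its terms of degree
`≥ m`. -/
def poleCorrector (K : Type*) [Field K] (i : ι) (m : ℕ) : MvPolynomial ι K :=
  C ((m + 1 : K)⁻¹) *
    (∑ c ∈ Finset.range m, ((m + 2).choose (c + 1) : MvPolynomial ι K) * X i ^ c - 1)

theorem X_mul_poleCorrector [CharZero K] (i : ι) (m : ℕ) :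
    ((m : MvPolynomial ι K) + 1) * (X i * poleCorrector K i m) =
      (1 + X i) ^ (m + 2) - (1 + X i) - X i ^ (m + 2) -
        ((m + 2 : ℕ) : MvPolynomial ι K) * X i ^ (m + 1) := by
  have hm : ((m : MvPolynomial ι K) + 1) * C ((m + 1 : K)⁻¹) = 1 := by
    rw [← map_natCast (C (σ := ι) (R := K)), ← C_1, ← C_add, ← C_mul,
      mul_inv_cancel₀ (Nat.cast_add_one_ne_zero m)]
  have hbinom : (1 + X i : MvPolynomial ι K) ^ (m + 2) =
      X i * ∑ c ∈ Finset.range m, ((m + 2).choose (c + 1) : MvPolynomial ι K) * X i ^ c +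
        ((m + 2 : ℕ) : MvPolynomial ι K) * X i ^ (m + 1) + X i ^ (m + 2) + 1 := by
    rw [add_comm 1 (X i), add_pow, Finset.sum_range_succ', Finset.sum_range_succ,
      Finset.sum_range_succ, Finset.mul_sum]
    simp only [Nat.choose_succ_self_right (m + 1), Nat.choose_self, Nat.choose_zero_right,
      one_pow, Nat.cast_one, pow_zero]
    ring_nf
  rw [hbinom, poleCorrector]
  linear_combination X i * (∑ c ∈ Finset.range m,
    ((m + 2).choose (c + 1) : MvPolynomial ι K) * X i ^ c - 1) * hm

theorem poleDeriv_poleCorrector [CharZero K] (i : ι) (m : ℕ) :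
    poleDeriv i (m + 2) (poleCorrector K i m) =
      1 + X i - ((m + 2 : ℕ) : MvPolynomial ι K) * X i ^ m := by
  have h := X_mul_poleCorrector (K := K) i m
  have hm : (m + 1 : MvPolynomial ι K) ≠ 0 := by exact_mod_cast Nat.succ_ne_zero m
  have h' := congrArg (pderiv i) h
  simp only [pderiv_mul, map_add, map_sub, pderiv_pow, pderiv_X_self, pderiv_one,
    Derivation.map_natCast, Nat.add_sub_cancel, Nat.add_succ_sub_one] at h'
  rw [poleDeriv_apply, pderiv_mul, pderiv_X_self]
  refine mul_left_cancel₀ hm ?_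
  push_cast at h h' ⊢
  linear_combination (1 + X i) * h' - (m + 2) * h

theorem poleDeriv_poleCorrector_mul [CharZero K] (hr : pderiv i r = 0) :
    poleDeriv i (m + 2) (poleCorrector K i m * r) =
      (1 + X i) * r - ((m + 2 : ℕ) : MvPolynomial ι K) * (X i ^ m * r) := by
  rw [poleDeriv_mul_of_pderiv_right hr, poleDeriv_poleCorrector]
  ring

theorem poleCorrector_mem_boxLT [DecidableEq ι] (i : ι) (m : ℕ) :
    poleCorrector K i m ∈ boxLT K (update 1 i (max m 1)) := by
  simp only [poleCorrector, ← C_eq_coe_nat, ← smul_eq_C_mul]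
  refine Submodule.smul_mem _ _ (sub_mem (sum_mem fun c hc => Submodule.smul_mem _ _ ?_) ?_)
  · exact X_pow_mem_boxLT i (lt_max_of_lt_left (Finset.mem_range.mp hc))
  · simpa using X_pow_mem_boxLT (R := K) i (lt_max_of_lt_right (b := m) (c := 1) one_pos)

theorem poleCorrector_mul_mem_boxLT [DecidableEq ι] (hr : r ∈ boxLT K b) (hi : b i = 1)
    (h : m = 0 → r = 0) : poleCorrector K i m * r ∈ boxLT K (update b i m) := by
  obtain rfl | hm := eq_or_ne m 0
  · simp [h rfl]
  · refine mul_mem_boxLT (poleCorrector_mem_boxLT i m) hr fun n => ?_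
    obtain rfl | hn := eq_or_ne n i
    · simp [hi]; omega
    · simp [hn, add_comm]

theorem exists_X_mul_eq_one_add_X_mul [DecidableEq ι] [CharZero K] (hY : Y ∈ boxLT K b)
    (hb : b i = m) (hF : F ∈ boxLT K (update b i 1))
    (h : poleDeriv i (m + 2) Y - 2 * (X i ^ m * F) ∈ boxLT K b) :
    ∃ W ∈ boxLT K b, X i * W = (1 + X i) * (X i * Y + X i ^ m * F) := by
  obtain _ | n := m
  · obtain rfl := eq_zero_of_mem_boxLT hY hb
    have hF0 : F = 0 := by simpa using eq_zero_of_mem_boxLT h hb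
    exact ⟨0, zero_mem _, by simp [hF0]⟩
  have hXF : X i ^ n * F ∈ boxLT K b := by
    simpa [← hb, add_comm 1 n] using X_pow_mul_mem_boxLT i n hF
  have hV : Y + X i ^ n * F ∈ boxLT K b := add_mem hY hXF
  have hDV : poleDeriv i (n + 1 + 2) (Y + X i ^ n * F) ∈ boxLT K b := by
    have hDF : poleDeriv i (n + 1 + 2) (Y + X i ^ n * F) =
        (poleDeriv i (n + 1 + 2) Y - 2 * (X i ^ (n + 1) * F)) + (n + 1 : K) • (X i ^ n * F) := by
      rw [map_add, poleDeriv_mul_of_pderiv_right (pderiv_eq_zero_of_mem_boxLT hF (by simp)),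
        poleDeriv_X_pow, smul_eq_C_mul]
      simp only [map_add, map_natCast, map_one, Nat.cast_add, Nat.cast_one, Nat.cast_ofNat]
      ring
    rw [hDF]
    exact add_mem h (Submodule.smul_mem _ _ hXF)
  have hV' := (isBidiagonal_poleDeriv i (n + 1 + 2)).mem_boxLT_of_apply_mem (n := n)
    (by push_cast; ring_nf; norm_num) hb hV hDV
  refine ⟨(1 + X i) * (Y + X i ^ n * F), ?_, by ring⟩
  rw [add_mul, one_mul]
  exact add_mem hV (by simpa [← hb] using X_pow_mul_mem_boxLT i 1 hV')

end Field

theorem exists_eq_add_smul_and_eq_sub_smul {K M : Type*} [Field K] [CharZero K] [AddCommGroup M]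
    [Module K M] {S : Submodule K M} {c : K} (hc : c ≠ 0) {x y : M} (hx : x ∈ S) (hy : y ∈ S) :
    ∃ p ∈ S, ∃ r ∈ S, x = p + c • r ∧ y = p - c • r := by
  refine ⟨(2⁻¹ : K) • (x + y), S.smul_mem _ (S.add_mem hx hy), c⁻¹ • (2⁻¹ : K) • (x - y),
    S.smul_mem _ (S.smul_mem _ (S.sub_mem hx hy)), ?_, ?_⟩ <;>
    rw [smul_inv_smul₀ hc] <;> module

section Splitting

variable {ι K : Type*} [Field K] [CharZero K] {i j : ι} {b : ι → ℕ}
  {p q r : MvPolynomial ι K} {l m : ℕ}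

theorem eq_zero_of_poleDeriv_add_eq_zero {b' : ι → ℕ} (hq : q ∈ boxLT K b) (hr : r ∈ boxLT K b')
    (hb' : b' j = 1) (h : poleDeriv i l q + X i ^ b i * (bubbleDeriv j p + r) = 0) :
    q = 0 ∧ p = 0 := by
  obtain rfl := (isBidiagonal_poleDeriv i l).eq_zero_of_add_X_pow_mul_eq_zero
    (fun c _ => Nat.cast_add_one_ne_zero c) hq h
  have hpr : bubbleDeriv j p + r = 0 := by simpa using h
  exact ⟨rfl, (isBidiagonal_bubbleDeriv j).eq_zero_of_add_eq_zero
    (fun c => neg_ne_zero.mpr (Nat.cast_ne_zero.mpr (c + 1).succ_ne_zero)) hr hb' hpr⟩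

theorem one_add_X_mul_bubbleDeriv (hp : p ∈ boxLT K b) (hb : b i = 1) (hij : i ≠ j) :
    (1 + X i) * bubbleDeriv j p = poleDeriv i (m + 2) (poleCorrector K i m * bubbleDeriv j p) +
      X i ^ m * bubbleDeriv j (((m + 2 : ℕ) : K) • p) := by
  classical
  have hp' := (isBidiagonal_bubbleDeriv (K := K) j).apply_mem_boxLT hp
  have h := poleDeriv_poleCorrector_mul (m := m)
    (pderiv_eq_zero_of_mem_boxLT hp' (i := i) (by simp [hij, hb]))
  rw [map_smul, smul_eq_C_mul, map_natCast]
  linear_combination -h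

variable [DecidableEq ι]

theorem exists_eq_poleDeriv_add (hij : i ≠ j)
    (hp : p ∈ boxLT K (update (update b j (b j + 1)) i (b i + 1))) :
    ∃ q ∈ boxLT K (update b j (b j + 1)), ∃ g ∈ boxLT K (update b i 1),
      ∃ t ∈ boxLT K (update (update b i 1) j 1),
        p = poleDeriv i l q + X i ^ b i * (bubbleDeriv j g + t) := by
  have hb : update b j (b j + 1) i = b i := update_of_ne hij _ _
  obtain ⟨q, hq, r, hr, rfl⟩ := (isBidiagonal_poleDeriv i l).exists_eq_apply_add_X_pow_mul
    (fun c _ => Nat.cast_add_one_ne_zero c) (b := update b j (b j + 1)) (by rwa [hb])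
  obtain ⟨g, hg, t, ht, rfl⟩ := (isBidiagonal_bubbleDeriv j).exists_eq_apply_add
    (fun c _ => neg_ne_zero.mpr (Nat.cast_ne_zero.mpr (c + 1).succ_ne_zero))
    (b := update b i 1) (by rwa [update_of_ne hij.symm, update_comm hij])
  exact ⟨q, hq, g, hg, t, ht, by rw [hb]⟩

theorem exists_X_pow_mul_add_eq_poleDeriv_add (hij : i ≠ j)
    (hp : p ∈ boxLT K (update (update b j (b j + 1)) i 1))
    (hq : q ∈ boxLT K (update b j (b j + 1))) :
    ∃ P ∈ boxLT K (update b j (b j + 1)), ∃ g ∈ boxLT K (update b i 1),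
      ∃ t ∈ boxLT K (update (update b i 1) j 1),
        2 * (X i ^ b i * p) + q = poleDeriv i l P + X i ^ b i * (bubbleDeriv j g + 2 * t) := by
  have hXp : X i ^ b i * p ∈ boxLT K (update (update b j (b j + 1)) i (b i + 1)) := by
    simpa [add_comm 1] using X_pow_mul_mem_boxLT i (b i) hp
  have hq' : q ∈ boxLT K (update (update b j (b j + 1)) i (b i + 1)) :=
    boxLT_mono (le_update_iff.mpr ⟨by simp [hij], fun _ _ => le_rfl⟩) hq
  obtain ⟨P, hP, g, hg, t, ht, h⟩ := exists_eq_poleDeriv_add (l := l) hij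
    (add_mem (add_mem hXp hXp) hq')
  refine ⟨P, hP, g, hg, (2⁻¹ : K) • t, Submodule.smul_mem _ _ ht, ?_⟩
  have h2 : 2 * ((2⁻¹ : K) • t) = t := by rw [two_mul]; module
  rw [h2, ← h]
  ring

end Splitting

section Numerators

variable {K : Type*} [Field K] {m : ℕ}
  {σ τ N₁ N₂ N₃ p₁ p₂ ρ p t s N p₁' p₂' ρ' p' t' s' N' : MvPolynomial (Fin 3) K}

/-- The curl of the generic element
`(y (1 - y) z p₁, x (1 - x) z p₂, x (1 - x) y (1 - y) ρ) / (1 + z) ^ (m + 2)` of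
`U^{(1),m+1}_{0,curl}`, encoded by `F` with
`(x (1 - x) F₁, y (1 - y) F₂, F₃) / (1 + z) ^ (m + 3)` the field. -/
def curlNumer (m : ℕ) (p₁ p₂ ρ : MvPolynomial (Fin 3) K) :
    MvPolynomial (Fin 3) K × MvPolynomial (Fin 3) K × MvPolynomial (Fin 3) K :=
  ((1 + X 2) * bubbleDeriv 1 ρ - poleDeriv 2 (m + 2) p₂,
   poleDeriv 2 (m + 2) p₁ - (1 + X 2) * bubbleDeriv 0 ρ,
   X 2 * (1 + X 2) * (bubbleDeriv 0 p₂ - bubbleDeriv 1 p₁))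

/-- The generic element of `U^{(2),m+1}_{0,div}`, with `x (1 - x) y (1 - y) p`, `x (1 - x) t`,
`y (1 - y) s` and `N / (1 + z) ^ (m + 3)` in the roles of `r`, `t`, `s` and `χ`, encoded as in
`curlNumer`. -/
def divNumer (m : ℕ) (p t s N : MvPolynomial (Fin 3) K) :
    MvPolynomial (Fin 3) K × MvPolynomial (Fin 3) K × MvPolynomial (Fin 3) K :=
  (X 2 ^ m * (bubbleDeriv 1 p + 2 * t),
   X 2 ^ m * (bubbleDeriv 0 p + 2 * s),
   X 2 ^ m * (1 + X 2) * (bubbleDeriv 0 (bubbleDeriv 1 p) + bubbleDeriv 1 s + bubbleDeriv 0 t) +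
     X 2 * N)

/-- The generic element of `U^{(2),m+1}_0`, with `Nᵢ / (1 + z) ^ (m + 3)` in the role of `χᵢ`,
encoded as in `curlNumer`. -/
def zeroNumer (m : ℕ) (σ τ N₁ N₂ N₃ : MvPolynomial (Fin 3) K) :
    MvPolynomial (Fin 3) K × MvPolynomial (Fin 3) K × MvPolynomial (Fin 3) K :=
  (2 * (X 2 ^ m * τ) + N₁,
   2 * (X 2 ^ m * σ) + N₂,
   X 2 ^ m * (1 + X 2) * (bubbleDeriv 1 σ + bubbleDeriv 0 τ) + X 2 * N₃)

theorem poleDeriv_sub_eq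
    (h₁ : (zeroNumer m σ τ N₁ N₂ N₃).1 = (curlNumer m p₁ p₂ ρ + divNumer m p t s N).1)
    (h₂ : (zeroNumer m σ τ N₁ N₂ N₃).2.1 = (curlNumer m p₁ p₂ ρ + divNumer m p t s N).2.1) :
    poleDeriv 2 (m + 2) (bubbleDeriv 0 p₂ - bubbleDeriv 1 p₁) - 2 * (X 2 ^ m *
      (bubbleDeriv 0 (bubbleDeriv 1 p) + bubbleDeriv 1 s + bubbleDeriv 0 t -
        (bubbleDeriv 1 σ + bubbleDeriv 0 τ))) = -(bubbleDeriv 0 N₁ + bubbleDeriv 1 N₂) := by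
  have hX {i : Fin 3} (hi : i ≠ 2) (q : MvPolynomial (Fin 3) K) :
      bubbleDeriv i (X 2 ^ m * q) = X 2 ^ m * bubbleDeriv i q :=
    bubbleDeriv_mul_of_pderiv_left (by simp [pderiv_X_of_ne hi.symm])
  have h1X {i : Fin 3} (hi : i ≠ 2) (q : MvPolynomial (Fin 3) K) :
      bubbleDeriv i ((1 + X 2) * q) = (1 + X 2) * bubbleDeriv i q :=
    bubbleDeriv_mul_of_pderiv_left (by simp [pderiv_X_of_ne hi.symm])
  have h2 (i : Fin 3) (q : MvPolynomial (Fin 3) K) :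
      bubbleDeriv i (2 * q) = 2 * bubbleDeriv i q := by
    simp only [two_mul, map_add]
  have e₁ := congrArg (bubbleDeriv 0) h₁
  have e₂ := congrArg (bubbleDeriv 1) h₂
  simp only [zeroNumer, curlNumer, divNumer, Prod.fst_add, Prod.snd_add, map_add, map_sub, ne_eq,
    Fin.reduceEq, not_false_eq_true, hX, h1X, h2, bubbleDeriv_poleDeriv] at e₁ e₂
  rw [map_sub, bubbleDeriv_comm zero_ne_one p]
  rw [bubbleDeriv_comm zero_ne_one p, bubbleDeriv_comm zero_ne_one ρ] at e₁
  linear_combination e₁ + e₂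

theorem poleCorrector_mul_bubbleDeriv_mem_boxLT (hρ : ρ ∈ boxLT K ![m, m, 1]) {i : Fin 3}
    (hi : 2 ≠ i) :
    poleCorrector K 2 m * bubbleDeriv i ρ ∈ boxLT K (update ![m, m, m] i (m + 1)) := by
  have hEρ : bubbleDeriv i ρ ∈ boxLT K (update ![m, m, 1] i (m + 1)) :=
    bubbleDeriv_mem_boxLT hρ (by fin_cases i <;> simp at hi ⊢)
  have hb : update ![m, m, m] i (m + 1) = update (update ![m, m, 1] i (m + 1)) 2 m := by
    rw [update_comm hi.symm]
    congr 1
    simp [funext_iff, Fin.forall_fin_succ]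
  rw [hb]
  refine poleCorrector_mul_mem_boxLT hEρ (by simp [hi]) fun hm => ?_
  rw [eq_zero_of_mem_boxLT hρ (i := 0) hm, map_zero]

theorem exists_zeroNumer_fst_snd_eq [CharZero K] (hσ : σ ∈ boxLT K ![m + 1, m, 1])
    (hτ : τ ∈ boxLT K ![m, m + 1, 1]) (hN₁ : N₁ ∈ boxLT K ![m, m + 1, m])
    (hN₂ : N₂ ∈ boxLT K ![m + 1, m, m]) :
    ∃ p₁ p₂ ρ p t s : MvPolynomial (Fin 3) K,
      (p₁ ∈ boxLT K ![m + 1, m, m] ∧ p₂ ∈ boxLT K ![m, m + 1, m] ∧ ρ ∈ boxLT K ![m, m, 1]) ∧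
      (p ∈ boxLT K ![m, m, 1] ∧ t ∈ boxLT K ![m, 1, 1] ∧ s ∈ boxLT K ![1, m, 1]) ∧
      ∀ N₃ N, (zeroNumer m σ τ N₁ N₂ N₃).1 = (curlNumer m p₁ p₂ ρ + divNumer m p t s N).1 ∧
        (zeroNumer m σ τ N₁ N₂ N₃).2.1 = (curlNumer m p₁ p₂ ρ + divNumer m p t s N).2.1 := by
  obtain ⟨q₂, hq₂, g, hg, t, ht, hsplit₁⟩ :=
    exists_X_pow_mul_add_eq_poleDeriv_add (b := ![m, m, m]) (i := 2) (j := 1) (l := m + 2)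
      (by decide) (boxLT_mono (by simp [Fin.forall_fin_succ]) hτ)
      (boxLT_mono (by simp [Fin.forall_fin_succ]) hN₁)
  obtain ⟨q₁, hq₁, h, hh, s, hs, hsplit₂⟩ :=
    exists_X_pow_mul_add_eq_poleDeriv_add (b := ![m, m, m]) (i := 2) (j := 0) (l := m + 2)
      (by decide) (boxLT_mono (by simp [Fin.forall_fin_succ]) hσ)
      (boxLT_mono (by simp [Fin.forall_fin_succ]) hN₂)
  obtain ⟨p, hp, ρ, hρ, rfl, rfl⟩ := exists_eq_add_smul_and_eq_sub_smul
    (S := boxLT K ![m, m, 1]) (c := ((m + 2 : ℕ) : K))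
    (Nat.cast_ne_zero.mpr (m + 1).succ_ne_zero)
    (boxLT_mono (by simp [Fin.forall_fin_succ]) hg) (boxLT_mono (by simp [Fin.forall_fin_succ]) hh)
  have hcorr {i : Fin 3} (hi : 2 ≠ i) := one_add_X_mul_bubbleDeriv (m := m) hρ rfl hi
  have hcorr_mem {i : Fin 3} (hi : 2 ≠ i) := poleCorrector_mul_bubbleDeriv_mem_boxLT hρ hi
  have hp₁ : q₁ + poleCorrector K 2 m * bubbleDeriv 0 ρ ∈ boxLT K ![m + 1, m, m] :=
    add_mem (boxLT_mono (by simp [Fin.forall_fin_succ]) hq₁)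
      (boxLT_mono (by simp [Fin.forall_fin_succ]) (hcorr_mem (i := 0) (by decide)))
  have hp₂ : poleCorrector K 2 m * bubbleDeriv 1 ρ - q₂ ∈ boxLT K ![m, m + 1, m] :=
    sub_mem (boxLT_mono (by simp [Fin.forall_fin_succ]) (hcorr_mem (i := 1) (by decide)))
      (boxLT_mono (by simp [Fin.forall_fin_succ]) hq₂)
  refine ⟨_, _, ρ, p, t, s, ⟨hp₁, hp₂, hρ⟩, ⟨hp, boxLT_mono (by simp [Fin.forall_fin_succ]) ht,
    boxLT_mono (by simp [Fin.forall_fin_succ]) hs⟩, fun N₃ N => ⟨?_, ?_⟩⟩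
  · simp only [map_add, Matrix.cons_val] at hsplit₁
    simp only [zeroNumer, curlNumer, divNumer, Prod.fst_add, map_sub]
    linear_combination hsplit₁ - hcorr (i := 1) (by decide)
  · simp only [map_sub, Matrix.cons_val] at hsplit₂
    simp only [zeroNumer, curlNumer, divNumer, Prod.fst_add, Prod.snd_add, map_add]
    linear_combination hsplit₂ + hcorr (i := 0) (by decide)

theorem exists_zeroNumer_eq_curlNumer_add_divNumer [CharZero K] (hσ : σ ∈ boxLT K ![m + 1, m, 1])
    (hτ : τ ∈ boxLT K ![m, m + 1, 1]) (hN₁ : N₁ ∈ boxLT K ![m, m + 1, m])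
    (hN₂ : N₂ ∈ boxLT K ![m + 1, m, m]) (hN₃ : N₃ ∈ boxLT K ![m + 1, m + 1, m]) :
    ∃ p₁ p₂ ρ p t s N : MvPolynomial (Fin 3) K,
      (p₁ ∈ boxLT K ![m + 1, m, m] ∧ p₂ ∈ boxLT K ![m, m + 1, m] ∧ ρ ∈ boxLT K ![m, m, 1]) ∧
      (p ∈ boxLT K ![m, m, 1] ∧ t ∈ boxLT K ![m, 1, 1] ∧ s ∈ boxLT K ![1, m, 1]) ∧
      N ∈ boxLT K ![m + 1, m + 1, m] ∧
      zeroNumer m σ τ N₁ N₂ N₃ = curlNumer m p₁ p₂ ρ + divNumer m p t s N := by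
  obtain ⟨p₁, p₂, ρ, p, t, s, ⟨hp₁, hp₂, hρ⟩, ⟨hp, ht, hs⟩, h⟩ :=
    exists_zeroNumer_fst_snd_eq hσ hτ hN₁ hN₂
  have hY : bubbleDeriv 0 p₂ - bubbleDeriv 1 p₁ ∈ boxLT K ![m + 1, m + 1, m] :=
    sub_mem (bubbleDeriv_mem_boxLT hp₂ (by simp [Fin.forall_fin_succ]))
      (bubbleDeriv_mem_boxLT hp₁ (by simp [Fin.forall_fin_succ]))
  have hEp : bubbleDeriv 1 p ∈ boxLT K ![m, m + 1, 1] :=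
    bubbleDeriv_mem_boxLT hp (by simp [Fin.forall_fin_succ])
  have hF : bubbleDeriv 0 (bubbleDeriv 1 p) + bubbleDeriv 1 s + bubbleDeriv 0 t -
      (bubbleDeriv 1 σ + bubbleDeriv 0 τ) ∈ boxLT K (update ![m + 1, m + 1, m] 2 1) :=
    sub_mem
      (add_mem
        (add_mem (bubbleDeriv_mem_boxLT hEp (by simp [Fin.forall_fin_succ]))
          (bubbleDeriv_mem_boxLT hs (by simp [Fin.forall_fin_succ])))
        (bubbleDeriv_mem_boxLT ht (by simp [Fin.forall_fin_succ])))
      (add_mem (bubbleDeriv_mem_boxLT hσ (by simp [Fin.forall_fin_succ]))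
        (bubbleDeriv_mem_boxLT hτ (by simp [Fin.forall_fin_succ])))
  have hN : -(bubbleDeriv 0 N₁ + bubbleDeriv 1 N₂) ∈ boxLT K ![m + 1, m + 1, m] :=
    neg_mem (add_mem (bubbleDeriv_mem_boxLT hN₁ (by simp [Fin.forall_fin_succ]))
      (bubbleDeriv_mem_boxLT hN₂ (by simp [Fin.forall_fin_succ])))
  obtain ⟨W, hW, hXW⟩ := exists_X_mul_eq_one_add_X_mul (m := m) hY rfl hF
    (poleDeriv_sub_eq (h N₃ 0).1 (h N₃ 0).2 ▸ hN)
  refine ⟨p₁, p₂, ρ, p, t, s, N₃ - W, ⟨hp₁, hp₂, hρ⟩, ⟨hp, ht, hs⟩, sub_mem hN₃ hW,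
    Prod.ext (h N₃ _).1 (Prod.ext (h N₃ _).2 ?_)⟩
  simp only [zeroNumer, curlNumer, divNumer, Prod.snd_add]
  linear_combination hXW

theorem eq_zero_of_curlNumer_add_divNumer_eq_zero [CharZero K] (hp₁ : p₁ ∈ boxLT K ![m + 1, m, m])
    (hp₂ : p₂ ∈ boxLT K ![m, m + 1, m]) (hρ : ρ ∈ boxLT K ![m, m, 1])
    (ht : t ∈ boxLT K ![m, 1, 1]) (hs : s ∈ boxLT K ![1, m, 1])
    (h : curlNumer m p₁ p₂ ρ + divNumer m p t s N = 0) : p₁ = 0 ∧ p₂ = 0 ∧ ρ = 0 := by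
  obtain ⟨h₁, h₂, -⟩ : _ ∧ _ ∧ _ := by simpa only [Prod.ext_iff] using h
  simp only [curlNumer, divNumer, Prod.fst_add, Prod.snd_add, Prod.fst_zero, Prod.snd_zero]
    at h₁ h₂
  have hcorr {i : Fin 3} (hi : 2 ≠ i) := one_add_X_mul_bubbleDeriv (m := m) hρ rfl hi
  have hcorr_mem {i : Fin 3} (hi : 2 ≠ i) := poleCorrector_mul_bubbleDeriv_mem_boxLT hρ hi
  obtain ⟨hq₂, hg⟩ := eq_zero_of_poleDeriv_add_eq_zero (i := 2) (j := 1) (l := m + 2)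
    (q := poleCorrector K 2 m * bubbleDeriv 1 ρ - p₂) (p := p + ((m + 2 : ℕ) : K) • ρ)
    (b := ![m, m + 1, m])
    (sub_mem (boxLT_mono (by simp [Fin.forall_fin_succ]) (hcorr_mem (i := 1) (by decide))) hp₂)
    (two_mul t ▸ add_mem ht ht) rfl (by
      simp only [map_add, map_sub, Matrix.cons_val]
      linear_combination h₁ - hcorr (i := 1) (by decide))
  obtain ⟨hq₁, hh⟩ := eq_zero_of_poleDeriv_add_eq_zero (i := 2) (j := 0) (l := m + 2)
    (q := p₁ - poleCorrector K 2 m * bubbleDeriv 0 ρ) (p := p - ((m + 2 : ℕ) : K) • ρ)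
    (b := ![m + 1, m, m])
    (sub_mem hp₁ (boxLT_mono (by simp [Fin.forall_fin_succ]) (hcorr_mem (i := 0) (by decide))))
    (two_mul s ▸ add_mem hs hs) rfl (by
      simp only [map_sub, Matrix.cons_val]
      linear_combination h₂ + hcorr (i := 0) (by decide))
  rw [sub_eq_zero.mp hh, add_self_eq_zero,
    smul_eq_zero_iff_right (Nat.cast_ne_zero.mpr (m + 1).succ_ne_zero)] at hg
  subst hg
  simp only [map_zero, mul_zero, sub_zero, zero_sub, neg_eq_zero] at hq₁ hq₂
  exact ⟨hq₁, hq₂, rfl⟩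

theorem curlNumer_sub (m : ℕ) (p₁ p₂ ρ p₁' p₂' ρ' : MvPolynomial (Fin 3) K) :
    curlNumer m (p₁ - p₁') (p₂ - p₂') (ρ - ρ') = curlNumer m p₁ p₂ ρ - curlNumer m p₁' p₂' ρ' := by
  simp only [curlNumer, map_sub, Prod.mk_sub_mk, Prod.mk.injEq]
  refine ⟨?_, ?_, ?_⟩ <;> ring

theorem divNumer_sub (m : ℕ) (p t s N p' t' s' N' : MvPolynomial (Fin 3) K) :
    divNumer m (p - p') (t - t') (s - s') (N - N') =
      divNumer m p t s N - divNumer m p' t' s' N' := by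
  simp only [divNumer, map_sub, Prod.mk_sub_mk, Prod.mk.injEq]
  refine ⟨?_, ?_, ?_⟩ <;> ring

theorem eq_of_curlNumer_add_divNumer_eq [CharZero K]
    (hp₁ : p₁ ∈ boxLT K ![m + 1, m, m]) (hp₁' : p₁' ∈ boxLT K ![m + 1, m, m])
    (hp₂ : p₂ ∈ boxLT K ![m, m + 1, m]) (hp₂' : p₂' ∈ boxLT K ![m, m + 1, m])
    (hρ : ρ ∈ boxLT K ![m, m, 1]) (hρ' : ρ' ∈ boxLT K ![m, m, 1])
    (ht : t ∈ boxLT K ![m, 1, 1]) (ht' : t' ∈ boxLT K ![m, 1, 1])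
    (hs : s ∈ boxLT K ![1, m, 1]) (hs' : s' ∈ boxLT K ![1, m, 1])
    (h : curlNumer m p₁ p₂ ρ + divNumer m p t s N =
      curlNumer m p₁' p₂' ρ' + divNumer m p' t' s' N') : p₁ = p₁' ∧ p₂ = p₂' ∧ ρ = ρ' := by
  simp only [← sub_eq_zero (b := p₁'), ← sub_eq_zero (b := p₂'), ← sub_eq_zero (b := ρ')]
  refine eq_zero_of_curlNumer_add_divNumer_eq_zero (p := p - p') (N := N - N') (sub_mem hp₁ hp₁')
    (sub_mem hp₂ hp₂') (sub_mem hρ hρ') (sub_mem ht ht') (sub_mem hs hs') ?_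
  rw [curlNumer_sub, divNumer_sub, sub_add_sub_comm, h, sub_self]

end Numerators

section Transport

variable {ι κ R : Type*} [CommRing R] {b : ι → ℕ} {b' : κ → ℕ} {f : ι → κ}

theorem map_rename_boxLT (hf : Injective f) (hb : b' ∘ f = b) (hb' : ∀ j ∉ Set.range f, b' j = 1) :
    (boxLT R b).map (rename f).toLinearMap = boxLT R b' := by
  refine le_antisymm (Submodule.map_le_iff_le_comap.mpr ?_) ?_ <;>
    refine boxLT_le_iff.mpr fun d hd => ?_
  · rw [Submodule.mem_comap, AlgHom.toLinearMap_apply, rename_monomial]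
    refine monomial_mem_boxLT (fun j => ?_) _
    by_cases hj : j ∈ Set.range f
    · obtain ⟨i, rfl⟩ := hj
      rw [Finsupp.mapDomain_apply hf]
      exact (hd i).trans_eq (congrFun hb i).symm
    · rw [Finsupp.mapDomain_of_notMem_range _ _ hj, hb' j hj]
      exact one_pos
  · have hd' : Finsupp.mapDomain f (d.comapDomain f hf.injOn) = d :=
      Finsupp.mapDomain_comapDomain f hf d fun j hj => by
        by_contra hr
        have := hd j
        rw [hb' j hr, Nat.lt_one_iff] at this
        exact Finsupp.mem_support_iff.mp hj this
    refine ⟨monomial (d.comapDomain f hf.injOn) 1, monomial_mem_boxLT (fun i => ?_) _, ?_⟩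
    · exact hb ▸ hd (f i)
    · rw [AlgHom.toLinearMap_apply, rename_monomial, hd']

theorem map_aeval_X_degreeLT [DecidableEq ι] (i : ι) (n : ℕ) :
    (Polynomial.degreeLT R n).map (Polynomial.aeval (X i : MvPolynomial ι R)).toLinearMap =
      boxLT R (update 1 i n) := by
  classical
  rw [Polynomial.degreeLT_eq_span_X_pow, Submodule.map_span, boxLT, restrictSupport_eq_span]
  congr 1
  ext p
  simp only [Finset.coe_image, Finset.coe_range, Set.mem_image, Set.mem_Iio,
    exists_exists_and_eq_and, AlgHom.toLinearMap_apply, map_pow, Polynomial.aeval_X,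
    X_pow_eq_monomial, Set.mem_ofPred_eq,
    lt_update_iff, Pi.one_apply, Nat.lt_one_iff]
  constructor
  · rintro ⟨c, hc, rfl⟩
    exact ⟨Finsupp.single i c, ⟨by simpa using hc, fun j hj => by simp [hj.symm]⟩, rfl⟩
  · rintro ⟨d, ⟨hd, h0⟩, rfl⟩
    refine ⟨d i, hd, congrArg (monomial · 1) (Finsupp.ext fun j => ?_)⟩
    obtain rfl | hj := eq_or_ne j i
    · exact Finsupp.single_eq_same
    · rw [Finsupp.single_eq_of_ne hj, h0 j hj]

theorem pderiv_X_mul_one_sub_X_mul {i j : ι} (hij : i ≠ j) (p : MvPolynomial ι R) :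
    pderiv j (X i * (1 - X i) * p) = X i * (1 - X i) * pderiv j p := by
  simp [pderiv_X_of_ne hij]

theorem aeval_X_derivative_X_mul (i : ι) (t : Polynomial R) :
    Polynomial.aeval (X i) (Polynomial.derivative (Polynomial.X * (1 - Polynomial.X) * t)) =
      bubbleDeriv i (Polynomial.aeval (X i : MvPolynomial ι R) t) := by
  have h := (pderiv (R := R) i).map_aeval (Polynomial.X * (1 - Polynomial.X) * t) (X i)
  rw [pderiv_X_self, smul_eq_mul, mul_one] at h
  rw [← h]
  simp [bubbleDeriv_apply]

theorem bubbleDeriv_rename (hf : Injective f) (i : ι) (p : MvPolynomial ι R) :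
    bubbleDeriv (f i) (rename f p) = rename f (bubbleDeriv i p) := by
  simp [bubbleDeriv_apply, ← pderiv_rename hf]

end Transport

section Fractions

theorem hasFDerivAt_eval_comp {E ι : Type*} [NormedAddCommGroup E] [NormedSpace ℝ E]
    [Fintype ι] {v : E → ι → ℝ} {v' : ι → E →L[ℝ] ℝ} {x : E}
    (hv : ∀ i, HasFDerivAt (fun y => v y i) (v' i) x) (p : MvPolynomial ι ℝ) :
    HasFDerivAt (fun y => eval (v y) p) (∑ i, eval (v x) (pderiv i p) • v' i) x := by
  classical
  induction p using MvPolynomial.induction_on with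
  | C a => simpa using hasFDerivAt_const a x
  | add p q hp hq =>
    simp only [map_add, add_smul, Finset.sum_add_distrib]
    exact hp.add hq
  | mul_X p j hp =>
    simp only [map_mul, eval_X]
    refine (hp.mul (hv j)).congr_fderiv ?_
    simp [pderiv_X, Pi.single_apply, add_smul, Finset.sum_add_distrib,
      Finset.smul_sum, smul_smul, apply_ite]

/-- The function `p / (1 + z) ^ k` of the point `(x, y, z)`, for a polynomial `p` in
`X 0 = x`, `X 1 = y` and `X 2 = z`. -/
def fracFun (k : ℕ) : MvPolynomial (Fin 3) ℝ →ₗ[ℝ] (ℝ × ℝ × ℝ → ℝ) where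
  toFun p q := eval ![q.1, q.2.1, q.2.2] p / (1 + q.2.2) ^ k
  map_add' p r := by ext q; simp [add_div]
  map_smul' c p := by ext q; simp [mul_div_assoc]

theorem fracFun_apply (k : ℕ) (p : MvPolynomial (Fin 3) ℝ) (q : ℝ × ℝ × ℝ) :
    fracFun k p q = eval ![q.1, q.2.1, q.2.2] p / (1 + q.2.2) ^ k := rfl

theorem map_fracFun_boxLT (l m n k : ℕ) :
    (boxLT ℝ ![l, m, n]).map (fracFun k) = Qsp ((l : ℤ) - 1) ((m : ℤ) - 1) ((n : ℤ) - 1) k := by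
  rw [boxLT, restrictSupport_eq_span, Submodule.map_span, Qsp]
  congr 1
  ext f
  simp only [Set.mem_image, Set.mem_ofPred_eq, exists_exists_and_eq_and]
  have h (d : Fin 3 →₀ ℕ) : fracFun k (monomial d 1) = qmon k (d 0) (d 1) (d 2) := by
    ext q
    simp [fracFun_apply, qmon, eval_monomial, Finsupp.prod_fintype, Fin.prod_univ_three]
  constructor
  · rintro ⟨d, hd, rfl⟩
    obtain ⟨h0, h1, h2⟩ : d 0 < l ∧ d 1 < m ∧ d 2 < n := ⟨hd 0, hd 1, hd 2⟩
    exact ⟨d 0, d 1, d 2, by omega, by omega, by omega, h d⟩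
  · rintro ⟨a, b, c, ha, hb, hc, rfl⟩
    have habc : a < l ∧ b < m ∧ c < n := by omega
    exact ⟨Finsupp.equivFunOnFinite.symm ![a, b, c], by simpa [Fin.forall_fin_succ], h _⟩

theorem fderiv_fracFun {k : ℕ} {q : ℝ × ℝ × ℝ} (hq : 1 + q.2.2 ≠ 0) (p : MvPolynomial (Fin 3) ℝ)
    (v : ℝ × ℝ × ℝ) :
    fderiv ℝ (fracFun k p) q v = v.1 * fracFun k (pderiv 0 p) q +
      v.2.1 * fracFun k (pderiv 1 p) q +
      v.2.2 * fracFun (k + 1) ((1 + X 2) * pderiv 2 p - (k : MvPolynomial (Fin 3) ℝ) * p) q := by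
  have hfst := hasFDerivAt_fst (𝕜 := ℝ) (p := q)
  have hsnd := hasFDerivAt_snd (𝕜 := ℝ) (p := q)
  have hnum := hasFDerivAt_eval_comp (x := q) (v := fun q : ℝ × ℝ × ℝ => ![q.1, q.2.1, q.2.2])
    (v' := ![_, _, _]) (by
      simpa [Fin.forall_fin_succ] using ⟨hfst, hsnd.fst, hsnd.snd⟩) p
  have hpole := (hasDerivAt_zpow (-k) (1 + q.2.2) (.inl hq)).comp_hasFDerivAt q
    (hsnd.snd.const_add 1)
  have h : HasFDerivAt (fracFun k p) _ q := (hnum.mul hpole).congr_of_eventuallyEq <|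
    .of_forall fun r => by simp [fracFun_apply, div_eq_mul_inv]
  rw [h.fderiv]
  simp only [Int.cast_neg, Int.cast_natCast, zpow_sub_one₀ hq, zpow_neg, zpow_natCast, neg_mul,
    neg_smul, smul_neg, comp_apply, Fin.sum_univ_three, Matrix.cons_val, smul_add,
    add_apply, neg_apply, smul_apply, ContinuousLinearMap.comp_apply, ContinuousLinearMap.coe_snd',
    ContinuousLinearMap.coe_fst', smul_eq_mul, fracFun_apply, map_sub, map_mul, map_add, map_one,
    eval_X, map_natCast, pow_succ]
  field_simp
  ring

end Fractions

section Fields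

/-- The vector field `(x (1 - x) F₁, y (1 - y) F₂, F₃) / (1 + z) ^ l`. -/
def bubbleField (l : ℕ) :
    MvPolynomial (Fin 3) ℝ × MvPolynomial (Fin 3) ℝ × MvPolynomial (Fin 3) ℝ →ₗ[ℝ]
      (ℝ × ℝ × ℝ → ℝ × ℝ × ℝ) where
  toFun F q := (fracFun l (X 0 * (1 - X 0) * F.1) q, fracFun l (X 1 * (1 - X 1) * F.2.1) q,
    fracFun l F.2.2 q)
  map_add' F G := by ext q <;> simp [mul_add]
  map_smul' c F := by ext q <;> simp

variable {l m : ℕ} {F G : MvPolynomial (Fin 3) ℝ × MvPolynomial (Fin 3) ℝ × MvPolynomial (Fin 3) ℝ}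

theorem bubbleField_apply (l : ℕ)
    (F : MvPolynomial (Fin 3) ℝ × MvPolynomial (Fin 3) ℝ × MvPolynomial (Fin 3) ℝ) (q : ℝ × ℝ × ℝ) :
    bubbleField l F q = (fracFun l (X 0 * (1 - X 0) * F.1) q,
      fracFun l (X 1 * (1 - X 1) * F.2.1) q, fracFun l F.2.2 q) := rfl

theorem eq_of_eval_eq_on_PyrInfInt {p r : MvPolynomial (Fin 3) ℝ}
    (h : ∀ q ∈ PyrInfInt, eval ![q.1, q.2.1, q.2.2] p = eval ![q.1, q.2.1, q.2.2] r) : p = r := by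
  refine funext_set ![Set.Ioo 0 1, Set.Ioo 0 1, Set.Ioi 0] ?_ fun v hv => ?_
  · simp [Fin.forall_fin_succ, Set.Ioo_infinite, Set.Ioi_infinite]
  · rw [Set.mem_univ_pi] at hv
    have hmem : (v 0, v 1, v 2) ∈ PyrInfInt := ⟨(hv 0).1, (hv 0).2, (hv 1).1, (hv 1).2, hv 2⟩
    have hvec : ![v 0, v 1, v 2] = v := (List.ofFn_injective rfl)
    simpa only [hvec] using h _ hmem

theorem one_add_ne_zero_of_mem_PyrInfInt {q : ℝ × ℝ × ℝ} (hq : q ∈ PyrInfInt) : 1 + q.2.2 ≠ 0 :=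
  (add_pos one_pos hq.2.2.2.2).ne'

theorem eqOn_bubbleField_iff : Set.EqOn (bubbleField l F) (bubbleField l G) PyrInfInt ↔ F = G := by
  refine ⟨fun h => Prod.ext ?_ (Prod.ext ?_ ?_), fun h => h ▸ Set.eqOn_refl _ _⟩ <;>
    refine eq_of_eval_eq_on_PyrInfInt fun q hq => ?_
  all_goals
    have hz := one_add_ne_zero_of_mem_PyrInfInt hq
    have := h hq
    obtain ⟨hx, hx', hy, hy', -⟩ := hq
    have := sub_ne_zero.mpr hx'.ne'
    have := sub_ne_zero.mpr hy'.ne'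
    simp_all [bubbleField_apply, fracFun_apply, hx.ne', hy.ne', div_left_inj']

theorem curl3_fracFun (l : ℕ) (P₁ P₂ P₃ : MvPolynomial (Fin 3) ℝ) {q : ℝ × ℝ × ℝ}
    (hq : 1 + q.2.2 ≠ 0) :
    curl3 (fun r => (fracFun l P₁ r, fracFun l P₂ r, fracFun l P₃ r)) q =
      (fracFun (l + 1) ((1 + X 2) * pderiv 1 P₃ -
        ((1 + X 2) * pderiv 2 P₂ - (l : MvPolynomial (Fin 3) ℝ) * P₂)) q,
       fracFun (l + 1) ((1 + X 2) * pderiv 2 P₁ - (l : MvPolynomial (Fin 3) ℝ) * P₁ -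
        (1 + X 2) * pderiv 0 P₃) q,
       fracFun (l + 1) ((1 + X 2) * (pderiv 0 P₂ - pderiv 1 P₁)) q) := by
  have h (p : MvPolynomial (Fin 3) ℝ) : fracFun (l + 1) ((1 + X 2) * p) q = fracFun l p q := by
    simp [fracFun_apply, pow_succ', mul_div_mul_left _ _ hq]
  simp only [curl3, pdx, pdy, pdz, fderiv_fracFun hq, map_sub, h, mul_sub, Pi.sub_apply,
    zero_mul, one_mul, zero_add, add_zero, sub_zero]

theorem eval_rename_castSucc (ρ : MvPolynomial (Fin 2) ℝ) (x y z : ℝ) :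
    eval ![x, y, z] (rename Fin.castSucc ρ) = eval ![x, y] ρ := by
  rw [eval_rename]
  congr 2
  ext i
  fin_cases i <;> rfl

theorem eval_aeval_X {ι : Type*} (i : ι) (t : Polynomial ℝ) (v : ι → ℝ) :
    eval v (Polynomial.aeval (X i) t) = t.eval (v i) := by
  rw [← coe_aeval_eq_eval, RingHom.coe_coe, ← Polynomial.aeval_algHom_apply, aeval_X,
    Polynomial.coe_aeval_eq_eval]

theorem curl3_U1curlFun (p₁ p₂ : MvPolynomial (Fin 3) ℝ) (ρ : MvPolynomial (Fin 2) ℝ)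
    {q : ℝ × ℝ × ℝ} (hq : 1 + q.2.2 ≠ 0) :
    curl3 (U1curlFun (m + 1) p₁ p₂ ρ) q =
      bubbleField (m + 3) (curlNumer m p₁ p₂ (rename Fin.castSucc ρ)) q := by
  have h : U1curlFun (m + 1) p₁ p₂ ρ = fun r => (fracFun (m + 2) (X 1 * (1 - X 1) * (X 2 * p₁)) r,
      fracFun (m + 2) (X 0 * (1 - X 0) * (X 2 * p₂)) r,
      fracFun (m + 2) (X 0 * (1 - X 0) * (X 1 * (1 - X 1) * rename Fin.castSucc ρ)) r) := by
    funext r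
    simp only [U1curlFun, fracFun_apply, eval_rename_castSucc, mul_assoc, map_mul, map_sub,
      map_one, eval_X]
    rfl
  have hE {i : Fin 3} (hi : i ≠ 2) (p : MvPolynomial (Fin 3) ℝ) :
      pderiv i (X i * (1 - X i) * (X 2 * p)) = X 2 * bubbleDeriv i p := by
    rw [← bubbleDeriv_apply, bubbleDeriv_mul_of_pderiv_left (pderiv_X_of_ne hi.symm)]
  have hX {i j : Fin 3} (hij : i ≠ j) (p : MvPolynomial (Fin 3) ℝ) :=
    pderiv_X_mul_one_sub_X_mul hij p
  have hρ : pderiv 0 (X 0 * (1 - X 0) * (X 1 * (1 - X 1) * rename Fin.castSucc ρ)) =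
      X 1 * (1 - X 1) * bubbleDeriv 0 (rename Fin.castSucc ρ) := by
    rw [mul_left_comm, hX one_ne_zero, bubbleDeriv_apply]
  rw [h, curl3_fracFun _ _ _ _ hq, bubbleField_apply]
  simp only [curlNumer, poleDeriv_apply, hE, hρ, hX, ne_eq, Fin.reduceEq, not_false_eq_true,
    ← bubbleDeriv_apply]
  refine Prod.ext ?_ (Prod.ext ?_ ?_) <;> refine congrFun (congrArg (fracFun _) ?_) q <;>
    push_cast <;> ring

theorem pderiv_one_bub2 (p : MvPolynomial (Fin 2) ℝ) :
    pderiv 1 (bub2 p) = X 0 * (1 - X 0) * bubbleDeriv 1 p := by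
  rw [bubbleDeriv_apply, ← pderiv_X_mul_one_sub_X_mul zero_ne_one, bub2]
  simp only [mul_assoc]

theorem pderiv_zero_bub2 (p : MvPolynomial (Fin 2) ℝ) :
    pderiv 0 (bub2 p) = X 1 * (1 - X 1) * bubbleDeriv 0 p := by
  rw [bubbleDeriv_apply, ← pderiv_X_mul_one_sub_X_mul one_ne_zero, bub2]
  congr 1
  ring

theorem U2divFun_eq_bubbleField (p : MvPolynomial (Fin 2) ℝ) (t s : Polynomial ℝ)
    (N : MvPolynomial (Fin 3) ℝ) :
    U2divFun (m + 1) p t s (fracFun (m + 3) N) = bubbleField (m + 3) (divNumer m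
      (rename Fin.castSucc p) (Polynomial.aeval (X 0) t) (Polynomial.aeval (X 1) s) N) := by
  funext q
  have hx (r : Polynomial ℝ) : r.eval q.1 = eval ![q.1, q.2.1, q.2.2] (Polynomial.aeval (X 0) r) :=
    (eval_aeval_X 0 r ![q.1, q.2.1, q.2.2]).symm
  have hy (r : Polynomial ℝ) :
      r.eval q.2.1 = eval ![q.1, q.2.1, q.2.2] (Polynomial.aeval (X 1) r) :=
    (eval_aeval_X 1 r ![q.1, q.2.1, q.2.2]).symm
  simp only [U2divFun, bub1, hx, hy, aeval_X_derivative_X_mul, pderiv_one_bub2, pderiv_zero_bub2,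
    ← bubbleDeriv_apply, ← eval_rename_castSucc _ q.1 q.2.1 q.2.2, map_mul, map_sub, map_one,
    rename_X, ← bubbleDeriv_rename (Fin.castSucc_injective 2), Fin.castSucc_zero, Fin.castSucc_one,
    Nat.add_sub_cancel]
  simp only [bubbleField_apply, fracFun_apply, divNumer, map_mul, map_sub, map_add, map_one,
    map_pow, eval_X, eval_ofNat, Polynomial.aeval_X, Matrix.cons_val, Prod.smul_mk, smul_eq_mul,
    Prod.mk_add_mk, add_zero, Prod.mk.injEq]
  refine ⟨?_, ?_, ?_⟩ <;> ring

theorem U2zeroFun_eq_bubbleField (σ τ : MvPolynomial (Fin 2) ℝ)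
    (N₁ N₂ N₃ : MvPolynomial (Fin 3) ℝ) :
    U2zeroFun (m + 1) σ τ (fracFun (m + 3) N₁) (fracFun (m + 3) N₂) (fracFun (m + 3) N₃) =
      bubbleField (m + 3)
        (zeroNumer m (rename Fin.castSucc σ) (rename Fin.castSucc τ) N₁ N₂ N₃) := by
  funext q
  simp only [U2zeroFun, ← bubbleDeriv_apply, ← eval_rename_castSucc _ q.1 q.2.1 q.2.2,
    ← bubbleDeriv_rename (Fin.castSucc_injective 2), map_mul, map_sub, map_one, rename_X,
    Fin.castSucc_zero, Fin.castSucc_one, Nat.add_sub_cancel]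
  simp only [bubbleField_apply, fracFun_apply, zeroNumer, map_mul, map_sub, map_add, map_one,
    map_pow, eval_X, eval_ofNat, Matrix.cons_val, Prod.smul_mk, smul_eq_mul, Prod.mk_add_mk,
    Prod.mk.injEq]
  refine ⟨?_, ?_, ?_⟩ <;> ring

theorem U2zeroFun_eq_curl3_add_U2divFun_iff {p₁ p₂ N₁ N₂ N₃ N : MvPolynomial (Fin 3) ℝ}
    {σ τ ρ p : MvPolynomial (Fin 2) ℝ} {t s : Polynomial ℝ} :
    (∀ q ∈ PyrInfInt, U2zeroFun (m + 1) σ τ (fracFun (m + 3) N₁) (fracFun (m + 3) N₂)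
        (fracFun (m + 3) N₃) q =
      curl3 (U1curlFun (m + 1) p₁ p₂ ρ) q + U2divFun (m + 1) p t s (fracFun (m + 3) N) q) ↔
    zeroNumer m (rename Fin.castSucc σ) (rename Fin.castSucc τ) N₁ N₂ N₃ =
      curlNumer m p₁ p₂ (rename Fin.castSucc ρ) + divNumer m (rename Fin.castSucc p)
        (Polynomial.aeval (X 0) t) (Polynomial.aeval (X 1) s) N := by
  rw [← eqOn_bubbleField_iff (l := m + 3), map_add, ← U2zeroFun_eq_bubbleField,
    ← U2divFun_eq_bubbleField]
  refine forall₂_congr fun q hq => ?_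
  rw [curl3_U1curlFun _ _ _ (one_add_ne_zero_of_mem_PyrInfInt hq), Pi.add_apply]

end Fields

section Bounds

variable {m : ℕ} {p₁ p₂ : MvPolynomial (Fin 3) ℝ} {ρ p : MvPolynomial (Fin 2) ℝ}
  {t s : Polynomial ℝ}

theorem natCast_succ_sub_two (m : ℕ) : ((m + 1 : ℕ) : ℤ) - 2 = (m : ℤ) - 1 := by
  omega

theorem map_rename_castSucc_boxLT (l n : ℕ) :
    (boxLT ℝ ![l, n]).map (rename (Fin.castSucc : Fin 2 → Fin 3)).toLinearMap =
      boxLT ℝ ![l, n, 1] :=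
  map_rename_boxLT (Fin.castSucc_injective 2) (by ext i; fin_cases i <;> rfl)
    (by simp [Fin.forall_fin_succ])

theorem map_aeval_X_zero_degreeLT (n : ℕ) :
    (Polynomial.degreeLT ℝ n).map (Polynomial.aeval (X 0 : MvPolynomial (Fin 3) ℝ)).toLinearMap =
      boxLT ℝ ![n, 1, 1] := by
  rw [map_aeval_X_degreeLT]
  congr 1
  simp [funext_iff, Fin.forall_fin_succ]

theorem map_aeval_X_one_degreeLT (n : ℕ) :
    (Polynomial.degreeLT ℝ n).map (Polynomial.aeval (X 1 : MvPolynomial (Fin 3) ℝ)).toLinearMap =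
      boxLT ℝ ![1, n, 1] := by
  rw [map_aeval_X_degreeLT]
  congr 1
  simp [funext_iff, Fin.forall_fin_succ]

theorem mem_boxLT_fin_two_iff {l m : ℕ} : p ∈ boxLT ℝ ![l, m] ↔
    ∀ d ∈ p.support, (d 0 : ℤ) ≤ (l : ℤ) - 1 ∧ (d 1 : ℤ) ≤ (m : ℤ) - 1 := by
  simp only [mem_boxLT, Fin.forall_fin_two, Matrix.cons_val_zero, Matrix.cons_val_one,
    Int.le_sub_one_iff, Nat.cast_lt]

theorem mem_boxLT_fin_three_iff {l m n : ℕ} : p₁ ∈ boxLT ℝ ![l, m, n] ↔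
    ∀ d ∈ p₁.support, (d 0 : ℤ) ≤ (l : ℤ) - 1 ∧ (d 1 : ℤ) ≤ (m : ℤ) - 1 ∧
      (d 2 : ℤ) ≤ (n : ℤ) - 1 := by
  simp only [mem_boxLT, Int.le_sub_one_iff, Nat.cast_lt]
  simp [Fin.forall_fin_succ]

theorem mem_degreeLT_iff {n : ℕ} :
    t ∈ Polynomial.degreeLT ℝ n ↔ ∀ c ∈ t.support, (c : ℤ) ≤ (n : ℤ) - 1 := by
  rw [Polynomial.mem_degreeLT, Polynomial.degree_lt_iff_coeff_zero]
  refine forall_congr' fun c => ?_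
  rw [Polynomial.mem_support_iff, Int.le_sub_one_iff, Nat.cast_lt, ← not_le, not_imp_not]

theorem U1curlBounds_succ_iff : U1curlBounds (m + 1) p₁ p₂ ρ ↔
    p₁ ∈ boxLT ℝ ![m + 1, m, m] ∧ p₂ ∈ boxLT ℝ ![m, m + 1, m] ∧ ρ ∈ boxLT ℝ ![m, m] := by
  simp only [U1curlBounds, mem_boxLT_fin_two_iff, mem_boxLT_fin_three_iff, natCast_succ_sub_two]

theorem U2divBounds_succ_iff : U2divBounds (m + 1) p t s ↔
    p ∈ boxLT ℝ ![m, m] ∧ t ∈ Polynomial.degreeLT ℝ m ∧ s ∈ Polynomial.degreeLT ℝ m := by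
  simp only [U2divBounds, mem_boxLT_fin_two_iff, mem_degreeLT_iff, natCast_succ_sub_two]

theorem exists_zeroNumer_rename_eq {σ τ : MvPolynomial (Fin 2) ℝ}
    {N₁ N₂ N₃ : MvPolynomial (Fin 3) ℝ} (hσ : σ ∈ boxLT ℝ ![m + 1, m])
    (hτ : τ ∈ boxLT ℝ ![m, m + 1]) (hN₁ : N₁ ∈ boxLT ℝ ![m, m + 1, m])
    (hN₂ : N₂ ∈ boxLT ℝ ![m + 1, m, m]) (hN₃ : N₃ ∈ boxLT ℝ ![m + 1, m + 1, m]) :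
    ∃ (p₁ p₂ : MvPolynomial (Fin 3) ℝ) (ρ p : MvPolynomial (Fin 2) ℝ) (t s : Polynomial ℝ)
      (N : MvPolynomial (Fin 3) ℝ), U1curlBounds (m + 1) p₁ p₂ ρ ∧ U2divBounds (m + 1) p t s ∧
      N ∈ boxLT ℝ ![m + 1, m + 1, m] ∧
      zeroNumer m (rename Fin.castSucc σ) (rename Fin.castSucc τ) N₁ N₂ N₃ =
        curlNumer m p₁ p₂ (rename Fin.castSucc ρ) + divNumer m (rename Fin.castSucc p)
          (Polynomial.aeval (X 0) t) (Polynomial.aeval (X 1) s) N := by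
  have hS {l n : ℕ} := map_rename_castSucc_boxLT l n
  obtain ⟨p₁, p₂, _, _, _, _, N, ⟨hp₁, hp₂, hρ⟩, ⟨hp, ht, hs⟩, hN, h⟩ :=
    exists_zeroNumer_eq_curlNumer_add_divNumer (hS ▸ Submodule.mem_map_of_mem hσ)
      (hS ▸ Submodule.mem_map_of_mem hτ) hN₁ hN₂ hN₃
  rw [← hS] at hρ hp
  rw [← map_aeval_X_zero_degreeLT] at ht
  rw [← map_aeval_X_one_degreeLT] at hs
  obtain ⟨ρ, hρ, rfl⟩ := hρ
  obtain ⟨p, hp, rfl⟩ := hp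
  obtain ⟨t, ht, rfl⟩ := ht
  obtain ⟨s, hs, rfl⟩ := hs
  exact ⟨p₁, p₂, ρ, p, t, s, N, U1curlBounds_succ_iff.mpr ⟨hp₁, hp₂, hρ⟩,
    U2divBounds_succ_iff.mpr ⟨hp, ht, hs⟩, hN, h⟩

theorem eq_of_curlNumer_rename_add_eq {p₁' p₂' N N' : MvPolynomial (Fin 3) ℝ}
    {ρ' p' : MvPolynomial (Fin 2) ℝ} {t' s' : Polynomial ℝ}
    (h₁ : U1curlBounds (m + 1) p₁ p₂ ρ) (h₁' : U1curlBounds (m + 1) p₁' p₂' ρ')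
    (h₂ : U2divBounds (m + 1) p t s) (h₂' : U2divBounds (m + 1) p' t' s')
    (h : curlNumer m p₁ p₂ (rename Fin.castSucc ρ) + divNumer m (rename Fin.castSucc p)
        (Polynomial.aeval (X 0) t) (Polynomial.aeval (X 1) s) N =
      curlNumer m p₁' p₂' (rename Fin.castSucc ρ') + divNumer m (rename Fin.castSucc p')
        (Polynomial.aeval (X 0) t') (Polynomial.aeval (X 1) s') N') :
    p₁ = p₁' ∧ p₂ = p₂' ∧ ρ = ρ' := by
  obtain ⟨hp₁, hp₂, hρ⟩ := U1curlBounds_succ_iff.mp h₁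
  obtain ⟨hp₁', hp₂', hρ'⟩ := U1curlBounds_succ_iff.mp h₁'
  obtain ⟨-, ht, hs⟩ := U2divBounds_succ_iff.mp h₂
  obtain ⟨-, ht', hs'⟩ := U2divBounds_succ_iff.mp h₂'
  obtain ⟨e₁, e₂, eρ⟩ := eq_of_curlNumer_add_divNumer_eq hp₁ hp₁' hp₂ hp₂'
    (map_rename_castSucc_boxLT m m ▸ Submodule.mem_map_of_mem hρ)
    (map_rename_castSucc_boxLT m m ▸ Submodule.mem_map_of_mem hρ')
    (map_aeval_X_zero_degreeLT m ▸ Submodule.mem_map_of_mem ht)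
    (map_aeval_X_zero_degreeLT m ▸ Submodule.mem_map_of_mem ht')
    (map_aeval_X_one_degreeLT m ▸ Submodule.mem_map_of_mem hs)
    (map_aeval_X_one_degreeLT m ▸ Submodule.mem_map_of_mem hs') h
  exact ⟨e₁, e₂, rename_injective _ (Fin.castSucc_injective 2) eρ⟩

end Bounds

/-- every `u ∈ U^{(2),k}_0(Ω∞)` can be written, uniquely, as
`u = curl w₁ + w₂` on `Ω∞°` with `w₁ ∈ U^{(1),k}_{0,curl}(Ω∞)` and
`w₂ ∈ U^{(2),k}_{0,div}(Ω∞)`. -/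
theorem U2zero_decomposition (k : ℕ) (hk : 1 ≤ k)
    (σ τ : MvPolynomial (Fin 2) ℝ)
    (hσ : ∀ d ∈ σ.support, (d 0 : ℤ) ≤ (k : ℤ) - 1 ∧ (d 1 : ℤ) ≤ (k : ℤ) - 2)
    (hτ : ∀ d ∈ τ.support, (d 0 : ℤ) ≤ (k : ℤ) - 2 ∧ (d 1 : ℤ) ≤ (k : ℤ) - 1)
    (χ₁ χ₂ χ₃ : (ℝ × ℝ × ℝ) → ℝ)
    (hχ₁ : χ₁ ∈ Qsp ((k : ℤ) - 2) ((k : ℤ) - 1) ((k : ℤ) - 2) (k + 2))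
    (hχ₂ : χ₂ ∈ Qsp ((k : ℤ) - 1) ((k : ℤ) - 2) ((k : ℤ) - 2) (k + 2))
    (hχ₃ : χ₃ ∈ Qsp ((k : ℤ) - 1) ((k : ℤ) - 1) ((k : ℤ) - 2) (k + 2)) :
    (∃ p₁ p₂ : MvPolynomial (Fin 3) ℝ, ∃ ρ : MvPolynomial (Fin 2) ℝ,
     ∃ p : MvPolynomial (Fin 2) ℝ, ∃ t s : Polynomial ℝ, ∃ χ : (ℝ × ℝ × ℝ) → ℝ,
       U1curlBounds k p₁ p₂ ρ ∧ U2divBounds k p t s ∧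
       χ ∈ Qsp ((k : ℤ) - 1) ((k : ℤ) - 1) ((k : ℤ) - 2) (k + 2) ∧
       ∀ q ∈ PyrInfInt,
         U2zeroFun k σ τ χ₁ χ₂ χ₃ q =
           curl3 (U1curlFun k p₁ p₂ ρ) q + U2divFun k p t s χ q) ∧
    (∀ p₁ p₂ p₁' p₂' : MvPolynomial (Fin 3) ℝ, ∀ ρ ρ' : MvPolynomial (Fin 2) ℝ,
     ∀ p p' : MvPolynomial (Fin 2) ℝ, ∀ t s t' s' : Polynomial ℝ,
     ∀ χ χ' : (ℝ × ℝ × ℝ) → ℝ,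
       U1curlBounds k p₁ p₂ ρ → U1curlBounds k p₁' p₂' ρ' →
       U2divBounds k p t s → U2divBounds k p' t' s' →
       χ ∈ Qsp ((k : ℤ) - 1) ((k : ℤ) - 1) ((k : ℤ) - 2) (k + 2) →
       χ' ∈ Qsp ((k : ℤ) - 1) ((k : ℤ) - 1) ((k : ℤ) - 2) (k + 2) →
       (∀ q ∈ PyrInfInt,
         U2zeroFun k σ τ χ₁ χ₂ χ₃ q =
           curl3 (U1curlFun k p₁ p₂ ρ) q + U2divFun k p t s χ q) →
       (∀ q ∈ PyrInfInt,
         U2zeroFun k σ τ χ₁ χ₂ χ₃ q =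
           curl3 (U1curlFun k p₁' p₂' ρ') q + U2divFun k p' t' s' χ' q) →
       ∀ q ∈ PyrInfInt,
         U1curlFun k p₁ p₂ ρ q = U1curlFun k p₁' p₂' ρ' q ∧
         U2divFun k p t s χ q = U2divFun k p' t' s' χ' q) := by
  obtain ⟨m, rfl⟩ := Nat.exists_eq_add_of_le' hk
  simp only [natCast_succ_sub_two, ← map_fracFun_boxLT, ← mem_boxLT_fin_two_iff]
    at hσ hτ hχ₁ hχ₂ hχ₃ ⊢
  obtain ⟨N₁, hN₁, rfl⟩ := hχ₁
  obtain ⟨N₂, hN₂, rfl⟩ := hχ₂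
  obtain ⟨N₃, hN₃, rfl⟩ := hχ₃
  constructor
  · obtain ⟨p₁, p₂, ρ, p, t, s, N, h₁, h₂, hN, h⟩ :=
      exists_zeroNumer_rename_eq hσ hτ hN₁ hN₂ hN₃
    exact ⟨p₁, p₂, ρ, p, t, s, fracFun (m + 3) N, h₁, h₂, ⟨N, hN, rfl⟩,
      U2zeroFun_eq_curl3_add_U2divFun_iff.mpr h⟩
  · rintro p₁ p₂ p₁' p₂' ρ ρ' p p' t s t' s' _ _ h₁ h₁' h₂ h₂' ⟨N, -, rfl⟩ ⟨N', -, rfl⟩ h h' q hq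
    obtain ⟨rfl, rfl, rfl⟩ := eq_of_curlNumer_rename_add_eq h₁ h₁' h₂ h₂' <|
      (U2zeroFun_eq_curl3_add_U2divFun_iff.mp h).symm.trans
        (U2zeroFun_eq_curl3_add_U2divFun_iff.mp h')
    exact ⟨rfl, add_left_cancel ((h q hq).symm.trans (h' q hq))⟩

end
end

section
/- Fix an integer k ≥ 1. For every u ∈ Q^{k−1,k−1,k−1}_{k+3} there exist a unique w ∈ U^{(2),k}_{0,div}(Ω∞) and a unique λ ∈ ℝ such that u(x,y,z) = (div w)(x,y,z) + λ/(1+z)⁴ for all (x,y,z) ∈ Ω∞°. (The function (x,y,z) ↦ λ/(1+z)⁴ is the pullback under φ of the constant 3-form λ on the finite pyramid; this is the decomposition U^{(3),k} = div U^{(2),k}_{0,div} ⊕ ℝ.) -/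
noncomputable section

/-- The divergence of a vector field at a point. -/
def div3 (f : ℝ × ℝ × ℝ → ℝ × ℝ × ℝ) (p : ℝ × ℝ × ℝ) : ℝ :=
  fderiv ℝ (fun q => (f q).1) p ((1 : ℝ), (0 : ℝ), (0 : ℝ)) +
  fderiv ℝ (fun q => (f q).2.1) p ((0 : ℝ), (1 : ℝ), (0 : ℝ)) +
  fderiv ℝ (fun q => (f q).2.2) p ((0 : ℝ), (0 : ℝ), (1 : ℝ))

/-! Since `div w = (k - 1) z^(k-2) / (1+z)^(k+2) * D(x,y) + ∂_z (z χ)`, where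
`D = r_xy + s' + t'` depends on `x, y` only, both halves of the statement separate the variable `z`
from the plane.

Existence: the fields `(0, 0, z χ)` identify, modulo the range of the divergence and up to nonzero
factors, every `x^a y^b z^c / (1+z)^j` with `x^a y^b / (1+z)^4`. Taking for `p` a product of two
one-variable polynomials, with matching `t` and `s`, makes `D` equal to `x^a y^b` minus its mean
over the unit square, so that only the multiples of `1 / (1+z)^4` are left.

Uniqueness: `z χ` tends to `0` both at `z = 0` and at infinity, so Rolle's theorem in `z` applied to
the difference of `z χ` at two points of the plane shows that `D` is constant on the unit square.
Rolle's theorem in `x` and in `y` then gives `r = s = t = 0`, and a last use of it in `z` gives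
`λ = 0`, whence `z χ = 0`. -/

open Filter Topology

section Calculus

/-! ### One-variable calculus -/

lemma exists_hasDerivAt_eq_zero_of_tendsto_atTop {f f' : ℝ → ℝ} {a l : ℝ}
    (ha : Tendsto f (𝓝[>] a) (𝓝 l)) (htop : Tendsto f atTop (𝓝 l))
    (hff' : ∀ x ∈ Set.Ioi a, HasDerivAt f (f' x) x) : ∃ c ∈ Set.Ioi a, f' c = 0 := by
  let φ : ℝ → ℝ := fun s ↦ s⁻¹ + (a - 1)
  have mem_Ioi_of_mem {s : ℝ} (hs : s ∈ Set.Ioo (0 : ℝ) 1) : φ s ∈ Set.Ioi a := by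
    have := (one_lt_inv₀ hs.1).2 hs.2
    simp only [φ, Set.mem_Ioi]
    linarith
  have tendsto_zero : Tendsto φ (𝓝[>] 0) atTop :=
    tendsto_atTop_add_const_right _ _ tendsto_inv_nhdsGT_zero
  have tendsto_one : Tendsto φ (𝓝[<] 1) (𝓝[>] a) := by
    refine tendsto_nhdsWithin_iff.2 ⟨?_, ?_⟩
    · have : ContinuousAt φ 1 := by fun_prop (disch := norm_num)
      simpa [φ] using this.tendsto.mono_left nhdsWithin_le_nhds
    · filter_upwards [Ioo_mem_nhdsLT one_pos] with s hs using mem_Ioi_of_mem hs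
  obtain ⟨s, hs, h⟩ := exists_hasDerivAt_eq_zero' one_pos (htop.comp tendsto_zero)
    (ha.comp tendsto_one) fun s hs ↦ (hff' _ (mem_Ioi_of_mem hs)).comp s
      ((hasDerivAt_inv hs.1.ne').add_const (a - 1))
  exact ⟨φ s, mem_Ioi_of_mem hs, by simpa [hs.1.ne'] using h⟩

lemma tendsto_pow_div_one_add_pow_atTop {i j : ℕ} (hij : i < j) :
    Tendsto (fun z : ℝ ↦ z ^ i / (1 + z) ^ j) atTop (𝓝 0) := by
  have hdeg : (Polynomial.X ^ i : Polynomial ℝ).degree <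
      ((Polynomial.X + Polynomial.C 1) ^ j : Polynomial ℝ).degree := by
    rw [Polynomial.degree_X_pow, Polynomial.degree_pow, Polynomial.degree_X_add_C, nsmul_one]
    exact_mod_cast hij
  simpa [add_comm] using Polynomial.div_tendsto_atTop_zero_of_degree_lt _ _ hdeg

lemma hasDerivAt_pow_div_one_add_pow (i j : ℕ) {z : ℝ} (hz : 1 + z ≠ 0) :
    HasDerivAt (fun z : ℝ ↦ z ^ i / (1 + z) ^ j)
      (i * z ^ (i - 1) / (1 + z) ^ j - j * z ^ i / (1 + z) ^ (j + 1)) z := by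
  have h := (hasDerivAt_pow i z).fun_div (((hasDerivAt_id' z).const_add 1).fun_pow j)
    (pow_ne_zero j hz)
  refine h.congr_deriv ?_
  rcases j with _ | j
  · simp
  · simp only [Nat.add_sub_cancel]
    field_simp
    ring

end Calculus

section PolynomialCalculus

/-! ### Polynomials in several variables -/

open MvPolynomial

variable {σ R 𝕜 : Type*}

lemma pderiv_pderiv_comm [CommRing R] (i j : σ) (P : MvPolynomial σ R) :
    pderiv i (pderiv j P) = pderiv j (pderiv i P) := by
  classical
  have : ⁅pderiv (R := R) i, pderiv j⁆ = 0 := derivation_ext fun l ↦ by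
    rw [Derivation.commutator_apply, pderiv_X, pderiv_X, Pi.single_apply, Pi.single_apply]
    split_ifs <;> simp
  rw [← sub_eq_zero, ← Derivation.commutator_apply, this, Derivation.zero_apply]

lemma eval_aeval_X_s16 [CommSemiring R] (v : σ → R) (i : σ) (T : Polynomial R) :
    eval v (Polynomial.aeval (X i : MvPolynomial σ R) T) = T.eval (v i) := by
  induction T using Polynomial.induction_on' with
  | add T S hT hS => simp [hT, hS]
  | monomial n a => simp

lemma degreeOf_aeval_X_le [CommSemiring R] (i : σ) (T : Polynomial R) :
    degreeOf i (Polynomial.aeval (X i : MvPolynomial σ R) T) ≤ T.natDegree := by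
  rcases subsingleton_or_nontrivial R with _ | _
  · simp [Subsingleton.elim (Polynomial.aeval (X i : MvPolynomial σ R) T) 0]
  rw [Polynomial.aeval_eq_sum_range]
  refine (degreeOf_sum_le _ _ _).trans (Finset.sup_le fun n hn ↦ ?_)
  rw [smul_eq_C_mul]
  refine (degreeOf_C_mul_le _ _ _).trans ?_
  rw [degreeOf_X_self_pow]
  exact Nat.lt_succ_iff.1 (Finset.mem_range.1 hn)

lemma degreeOf_aeval_X_of_ne [CommSemiring R] {i j : σ} (hij : i ≠ j) (T : Polynomial R) :
    degreeOf i (Polynomial.aeval (X j : MvPolynomial σ R) T) = 0 := by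
  rw [Polynomial.aeval_eq_sum_range, ← Nat.le_zero]
  refine (degreeOf_sum_le _ _ _).trans (Finset.sup_le fun n _ ↦ ?_)
  rw [smul_eq_C_mul]
  exact (degreeOf_C_mul_le _ _ _).trans (degreeOf_X_pow_of_ne n hij).le

lemma hasDerivAt_eval_update [NontriviallyNormedField 𝕜] [DecidableEq σ]
    (P : MvPolynomial σ 𝕜) (v : σ → 𝕜) (i : σ) (x : 𝕜) :
    HasDerivAt (fun x ↦ eval (Function.update v i x) P)
      (eval (Function.update v i x) (pderiv i P)) x := by
  induction P using MvPolynomial.induction_on with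
  | C a => simpa using hasDerivAt_const x a
  | add P Q hP hQ => simpa using hP.fun_add hQ
  | mul_X P j hP =>
    have hX : HasDerivAt (fun x ↦ Function.update v i x j)
        (eval (Function.update v i x) (pderiv i (X j))) x := by
      refine (hasDerivAt_pi.1 (hasDerivAt_update v i x) j).congr_deriv ?_
      rw [pderiv_X, Pi.single_apply, Pi.single_apply]
      split_ifs <;> simp_all
    simpa [mul_comm, add_comm] using hP.fun_mul hX

lemma eq_zero_of_pderiv_eq_zero [RCLike 𝕜] {P : MvPolynomial σ 𝕜} {i : σ}
    (hP : pderiv i P = 0) (h0 : ∀ v : σ → 𝕜, v i = 0 → eval v P = 0) : P = 0 := by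
  classical
  refine funext fun v ↦ ?_
  have hderiv (x : 𝕜) : HasDerivAt (fun x ↦ eval (Function.update v i x) P) 0 x := by
    simpa [hP] using hasDerivAt_eval_update P v i x
  have hconst := is_const_of_deriv_eq_zero (fun x ↦ (hderiv x).differentiableAt)
    (fun x ↦ (hderiv x).deriv) (v i) 0
  simpa [h0 (Function.update v i 0)] using hconst

lemma hasDerivAt_eval_left (P : MvPolynomial (Fin 2) ℝ) (x y : ℝ) :
    HasDerivAt (fun x ↦ eval ![x, y] P) (eval ![x, y] (pderiv 0 P)) x := by
  have hupdate (x' : ℝ) : Function.update ![x, y] 0 x' = ![x', y] := by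
    ext i; fin_cases i <;> simp
  simpa only [hupdate] using hasDerivAt_eval_update P ![x, y] 0 x

lemma hasDerivAt_eval_right (P : MvPolynomial (Fin 2) ℝ) (x y : ℝ) :
    HasDerivAt (fun y ↦ eval ![x, y] P) (eval ![x, y] (pderiv 1 P)) y := by
  have hupdate (y' : ℝ) : Function.update ![x, y] 1 y' = ![x, y'] := by
    ext i; fin_cases i <;> simp
  simpa only [hupdate] using hasDerivAt_eval_update P ![x, y] 1 y

@[fun_prop]
lemma differentiableAt_eval_vec {E : Type*} [NormedAddCommGroup E] [NormedSpace ℝ E]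
    {f g : E → ℝ} {e : E} (P : MvPolynomial (Fin 2) ℝ) (hf : DifferentiableAt ℝ f e)
    (hg : DifferentiableAt ℝ g e) : DifferentiableAt ℝ (fun e ↦ eval ![f e, g e] P) e := by
  have hP : DifferentiableAt ℝ (fun v : Fin 2 → ℝ ↦ eval v P) ![f e, g e] :=
    (AnalyticOnNhd.eval_mvPolynomial P _ (Set.mem_univ _)).differentiableAt
  have hvec : DifferentiableAt ℝ (fun e ↦ ![f e, g e]) e := by
    refine differentiableAt_pi.2 fun i ↦ ?_
    fin_cases i <;> simpa
  exact hP.comp e (f := fun e ↦ ![f e, g e]) hvec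

end PolynomialCalculus

section Divergence

/-! ### The divergence -/

lemma div3_eq_fderiv {f : ℝ × ℝ × ℝ → ℝ × ℝ × ℝ} {q : ℝ × ℝ × ℝ}
    (hf : DifferentiableAt ℝ f q) :
    div3 f q = (fderiv ℝ f q (1, 0, 0)).1 + (fderiv ℝ f q (0, 1, 0)).2.1 +
      (fderiv ℝ f q (0, 0, 1)).2.2 := by
  simp only [div3, fderiv.fst hf, fderiv.fst hf.snd, fderiv.snd hf, fderiv.snd hf.snd]
  rfl

lemma div3_add {f g : ℝ × ℝ × ℝ → ℝ × ℝ × ℝ} {q : ℝ × ℝ × ℝ} (hf : DifferentiableAt ℝ f q)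
    (hg : DifferentiableAt ℝ g q) : div3 (f + g) q = div3 f q + div3 g q := by
  simp only [div3_eq_fderiv, hf, hg, hf.add hg, fderiv_add, add_apply,
    Prod.fst_add, Prod.snd_add]
  ring

lemma div3_smul {f : ℝ × ℝ × ℝ → ℝ × ℝ × ℝ} {q : ℝ × ℝ × ℝ} (a : ℝ)
    (hf : DifferentiableAt ℝ f q) : div3 (a • f) q = a * div3 f q := by
  simp only [div3_eq_fderiv, hf, hf.const_smul a, fderiv_const_smul, smul_apply,
    Prod.smul_fst, Prod.smul_snd, smul_eq_mul]
  ring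

lemma div3_sub {f g : ℝ × ℝ × ℝ → ℝ × ℝ × ℝ} {q : ℝ × ℝ × ℝ} (hf : DifferentiableAt ℝ f q)
    (hg : DifferentiableAt ℝ g q) : div3 (f - g) q = div3 f q - div3 g q := by
  rw [sub_eq_add_neg, ← neg_one_smul ℝ g, div3_add hf (hg.const_smul _), div3_smul _ hg]
  ring

lemma div3_eq_of_hasDerivAt {f : ℝ × ℝ × ℝ → ℝ × ℝ × ℝ} {x y z a b c : ℝ}
    (hf : DifferentiableAt ℝ f (x, y, z))
    (ha : HasDerivAt (fun x ↦ (f (x, y, z)).1) a x)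
    (hb : HasDerivAt (fun y ↦ (f (x, y, z)).2.1) b y)
    (hc : HasDerivAt (fun z ↦ (f (x, y, z)).2.2) c z) : div3 f (x, y, z) = a + b + c := by
  have hfst := hf.fst.hasFDerivAt.comp_hasDerivAt x
    ((hasDerivAt_id x).prodMk (hasDerivAt_const x (y, z)))
  have hsnd := hf.snd.fst.hasFDerivAt.comp_hasDerivAt y
    ((hasDerivAt_const y x).prodMk ((hasDerivAt_id y).prodMk (hasDerivAt_const y z)))
  have hthd := hf.snd.snd.hasFDerivAt.comp_hasDerivAt z
    ((hasDerivAt_const z x).prodMk ((hasDerivAt_const z y).prodMk (hasDerivAt_id z)))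
  exact congrArg₂ (· + ·) (congrArg₂ (· + ·) (hfst.unique ha) (hsnd.unique hb)) (hthd.unique hc)

end Divergence

section WeightedMonomials

/-! ### The spaces `Q^{l,m,n}_k` -/

variable {l m n : ℤ} {k : ℕ} {χ : ℝ × ℝ × ℝ → ℝ}

-- At `1 + z = 0` all three functions are `0`, by the junk value of the division by `0 ^ j`.
lemma qmon_eq_add {j : ℕ} (hj : j ≠ 0) (a b c : ℕ) :
    qmon j a b c = qmon (j + 1) a b c + qmon (j + 1) a b (c + 1) := by
  ext q
  by_cases hq : 1 + q.2.2 = 0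
  · simp [qmon, hq, hj]
  · simp only [qmon, Pi.add_apply]
    field_simp
    ring

lemma qmon_mem_Qsp {a b c j : ℕ} (hj : j ≠ 0) (hjk : j ≤ k) (ha : (a : ℤ) ≤ l) (hb : (b : ℤ) ≤ m)
    (hc : (c : ℤ) + k ≤ n + j) : qmon j a b c ∈ Qsp l m n k := by
  induction hjk using Nat.decreasingInduction generalizing c with
  | self => exact Submodule.subset_span ⟨a, b, c, ha, hb, by lia, rfl⟩
  | of_succ j _ ih =>
    rw [qmon_eq_add hj]
    exact add_mem (ih (by lia) (by lia)) (ih (by lia) (by lia))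

lemma differentiableAt_of_mem_Qsp (hχ : χ ∈ Qsp l m n k) {q : ℝ × ℝ × ℝ} (hq : 1 + q.2.2 ≠ 0) :
    DifferentiableAt ℝ χ q := by
  induction hχ using Submodule.span_induction with
  | mem f hf =>
    obtain ⟨a, b, c, -, -, -, rfl⟩ := hf
    unfold qmon
    fun_prop (disch := exact pow_ne_zero _ hq)
  | zero => exact differentiableAt_const 0
  | add f g _ _ hf hg => exact hf.add hg
  | smul a f _ hf => exact hf.const_smul a

lemma differentiableAt_mul_of_mem_Qsp (hχ : χ ∈ Qsp l m n k) (x y : ℝ) {z : ℝ}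
    (hz : 1 + z ≠ 0) : DifferentiableAt ℝ (fun z ↦ z * χ (x, y, z)) z := by
  have hχ' : DifferentiableAt ℝ (fun z ↦ χ (x, y, z)) z :=
    (differentiableAt_of_mem_Qsp hχ hz).comp z (f := fun z ↦ (x, y, z)) (by fun_prop)
  exact differentiableAt_fun_id.fun_mul hχ'

lemma tendsto_mul_atTop_of_mem_Qsp (hn : n + 2 ≤ k) (hχ : χ ∈ Qsp l m n k) (x y : ℝ) :
    Tendsto (fun z ↦ z * χ (x, y, z)) atTop (𝓝 0) := by
  induction hχ using Submodule.span_induction with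
  | mem f hf =>
    obtain ⟨a, b, c, -, -, hc, rfl⟩ := hf
    have h := (tendsto_pow_div_one_add_pow_atTop
      (show c + 1 < k by lia)).const_mul (x ^ a * y ^ b)
    rw [mul_zero] at h
    refine h.congr fun z ↦ ?_
    rw [qmon]
    ring
  | zero => simp
  | add f g _ _ hf hg => simpa [mul_add] using hf.add hg
  | smul a f _ hf => simpa [mul_left_comm] using hf.const_mul a

lemma tendsto_mul_nhdsGT_zero_of_mem_Qsp (hχ : χ ∈ Qsp l m n k) (x y : ℝ) :
    Tendsto (fun z ↦ z * χ (x, y, z)) (𝓝[>] 0) (𝓝 0) := by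
  have h := (differentiableAt_mul_of_mem_Qsp hχ x y (z := 0) (by simp)).continuousAt.tendsto
  simpa using h.mono_left nhdsWithin_le_nhds

end WeightedMonomials

section FieldData

/-! ### The fields of `U^{(2),k}_{0,div}` -/

variable {k : ℕ} {p p' : MvPolynomial (Fin 2) ℝ} {t s t' s' : Polynomial ℝ}
  {χ : ℝ × ℝ × ℝ → ℝ}

lemma bub2_add (p p' : MvPolynomial (Fin 2) ℝ) : bub2 (p + p') = bub2 p + bub2 p' :=
  mul_add _ _ _

lemma bub2_smul (a : ℝ) (p : MvPolynomial (Fin 2) ℝ) : bub2 (a • p) = a • bub2 p :=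
  mul_smul_comm _ _ _

lemma bub1_add (t t' : Polynomial ℝ) : bub1 (t + t') = bub1 t + bub1 t' :=
  mul_add _ _ _

lemma bub1_smul (a : ℝ) (t : Polynomial ℝ) : bub1 (a • t) = a • bub1 t :=
  mul_smul_comm _ _ _

lemma bub2_eq_zero_iff : bub2 p = 0 ↔ p = 0 := by
  have h (i : Fin 2) : (1 - MvPolynomial.X i : MvPolynomial (Fin 2) ℝ) ≠ 0 := fun h ↦ by
    simpa using congrArg (MvPolynomial.eval 0) h
  simp [bub2, h, MvPolynomial.X_ne_zero]

lemma bub1_eq_zero_iff : bub1 t = 0 ↔ t = 0 := by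
  have h : (1 - Polynomial.X : Polynomial ℝ) ≠ 0 := fun h ↦ by
    simpa using congrArg (Polynomial.eval 0) h
  simp [bub1, h, Polynomial.X_ne_zero]

lemma U2divFun_zero (k : ℕ) : U2divFun k 0 0 0 0 = 0 := by
  ext <;> simp [U2divFun, bub1, bub2]

lemma U2divFun_add (k : ℕ) (p p' : MvPolynomial (Fin 2) ℝ) (t s t' s' : Polynomial ℝ)
    (χ χ' : ℝ × ℝ × ℝ → ℝ) :
    U2divFun k (p + p') (t + t') (s + s') (χ + χ') =
      U2divFun k p t s χ + U2divFun k p' t' s' χ' := by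
  ext q <;>
  · simp only [U2divFun, bub2_add, bub1_add, map_add, Polynomial.eval_add, Pi.add_apply,
      Prod.fst_add, Prod.snd_add, Prod.smul_fst, Prod.smul_snd, smul_eq_mul]
    ring

lemma U2divFun_smul (k : ℕ) (a : ℝ) (p : MvPolynomial (Fin 2) ℝ) (t s : Polynomial ℝ)
    (χ : ℝ × ℝ × ℝ → ℝ) :
    U2divFun k (a • p) (a • t) (a • s) (a • χ) = a • U2divFun k p t s χ := by
  ext q <;>
  · simp only [U2divFun, bub2_smul, bub1_smul, Derivation.map_smul, map_smul,
      MvPolynomial.smul_eval, Polynomial.eval_smul, Pi.smul_apply, Prod.fst_add, Prod.snd_add,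
      Prod.smul_fst, Prod.smul_snd, smul_eq_mul]
    ring

namespace U2divBounds

lemma zero (k : ℕ) : U2divBounds k 0 0 0 := by simp [U2divBounds]

lemma add (h : U2divBounds k p t s) (h' : U2divBounds k p' t' s') :
    U2divBounds k (p + p') (t + t') (s + s') :=
  ⟨fun d hd ↦ (Finset.mem_union.1 (MvPolynomial.support_add hd)).elim (h.1 d) (h'.1 d),
    fun n hn ↦ (Finset.mem_union.1 (Polynomial.support_add hn)).elim (h.2.1 n) (h'.2.1 n),
    fun n hn ↦ (Finset.mem_union.1 (Polynomial.support_add hn)).elim (h.2.2 n) (h'.2.2 n)⟩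

lemma smul (a : ℝ) (h : U2divBounds k p t s) : U2divBounds k (a • p) (a • t) (a • s) :=
  ⟨fun d hd ↦ h.1 d (MvPolynomial.support_smul hd),
    fun n hn ↦ h.2.1 n (Polynomial.support_smul a t hn),
    fun n hn ↦ h.2.2 n (Polynomial.support_smul a s hn)⟩

lemma eq_zero (hk : k < 2) (h : U2divBounds k p t s) : p = 0 ∧ t = 0 ∧ s = 0 := by
  refine ⟨MvPolynomial.support_eq_empty.1 ?_, Polynomial.support_eq_empty.1 ?_,
    Polynomial.support_eq_empty.1 ?_⟩ <;> refine Finset.eq_empty_of_forall_notMem fun d hd ↦ ?_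
  · have := (h.1 d hd).1
    lia
  · have := h.2.1 d hd
    lia
  · have := h.2.2 d hd
    lia

lemma of_degree_le {n : ℕ} (hp₀ : p.degreeOf 0 ≤ n) (hp₁ : p.degreeOf 1 ≤ n)
    (ht : t.natDegree ≤ n) (hs : s.natDegree ≤ n) : U2divBounds (n + 2) p t s := by
  rw [MvPolynomial.degreeOf_le_iff] at hp₀ hp₁
  refine ⟨fun d hd ↦ ?_, fun i hi ↦ ?_, fun i hi ↦ ?_⟩
  · have := hp₀ d hd
    have := hp₁ d hd
    lia
  · have := Polynomial.le_natDegree_of_mem_supp i hi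
    lia
  · have := Polynomial.le_natDegree_of_mem_supp i hi
    lia

end U2divBounds

/-- The planar part `∂²r/∂x∂y + ∂s/∂y + ∂t/∂x` of the third component of a field of
`U^{(2),k}_{0,div}`, with `r`, `t`, `s` the bubbles generated by `p`, `t`, `s`. It is also, up to a
weight in `z`, the divergence of the part of the field that does not involve `χ`. -/
def mixedDeriv (p : MvPolynomial (Fin 2) ℝ) (t s : Polynomial ℝ) (x y : ℝ) : ℝ :=
  MvPolynomial.eval ![x, y] (MvPolynomial.pderiv 0 (MvPolynomial.pderiv 1 (bub2 p))) +
    (Polynomial.derivative (bub1 s)).eval y + (Polynomial.derivative (bub1 t)).eval x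

lemma differentiableAt_U2divFun {q : ℝ × ℝ × ℝ} (hq : 1 + q.2.2 ≠ 0)
    (hχ : DifferentiableAt ℝ χ q) : DifferentiableAt ℝ (U2divFun k p t s χ) q := by
  unfold U2divFun
  fun_prop (disch := exact pow_ne_zero _ hq)

lemma snd_snd_U2divFun (k : ℕ) (p : MvPolynomial (Fin 2) ℝ) (t s : Polynomial ℝ)
    (χ : ℝ × ℝ × ℝ → ℝ) (x y z : ℝ) :
    (U2divFun k p t s χ (x, y, z)).2.2 =
      z ^ (k - 1) / (1 + z) ^ (k + 1) * mixedDeriv p t s x y + z * χ (x, y, z) := by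
  change z ^ (k - 1) / (1 + z) ^ (k + 2) * ((1 + z) * mixedDeriv p t s x y) + _ = _
  by_cases hz : 1 + z = 0
  · simp [hz]
  · field_simp
    ring

lemma div3_U2divFun (hk : 1 ≤ k) (p : MvPolynomial (Fin 2) ℝ) (t s : Polynomial ℝ) {x y z : ℝ}
    (hz : 1 + z ≠ 0) (hχ : DifferentiableAt ℝ χ (x, y, z)) :
    div3 (U2divFun k p t s χ) (x, y, z) =
      (k - 1) * (z ^ (k - 2) / (1 + z) ^ (k + 2) * mixedDeriv p t s x y) +
        deriv (fun z ↦ z * χ (x, y, z)) z := by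
  obtain ⟨k, rfl⟩ := Nat.exists_eq_add_of_le' hk
  have hχz : DifferentiableAt ℝ (fun z ↦ χ (x, y, z)) z :=
    hχ.comp z (f := fun z ↦ (x, y, z)) (by fun_prop)
  have hfst := (((hasDerivAt_eval_left (MvPolynomial.pderiv 1 (bub2 p)) x y).fun_add
    (((bub1 t).hasDerivAt x).const_mul 2)).const_mul (z ^ k / (1 + z) ^ (k + 3))).add_const 0
  have hsnd := (((hasDerivAt_eval_right (MvPolynomial.pderiv 0 (bub2 p)) x y).fun_add
    (((bub1 s).hasDerivAt y).const_mul 2)).const_mul (z ^ k / (1 + z) ^ (k + 3))).add_const 0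
  have hthd := (((hasDerivAt_pow_div_one_add_pow k (k + 2) hz).mul_const
    (mixedDeriv p t s x y)).fun_add (differentiableAt_fun_id.fun_mul hχz).hasDerivAt)
    |>.congr_of_eventuallyEq (.of_forall fun z ↦ snd_snd_U2divFun (k + 1) p t s χ x y z)
  rw [div3_eq_of_hasDerivAt (f := U2divFun (k + 1) p t s χ) (differentiableAt_U2divFun hz hχ)
    hfst hsnd hthd, pderiv_pderiv_comm 1 0, mixedDeriv]
  rcases k with _ | k <;> push_cast <;> field_simp <;> ring

end FieldData

section Spaces

/-! ### The space of fields and the range of the divergence -/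

variable {k : ℕ} {w : ℝ × ℝ × ℝ → ℝ × ℝ × ℝ} {u v : ℝ × ℝ × ℝ → ℝ}

/-- The space `U^{(2),k}_{0,div}(Ω∞)`, its elements being extended to `ℝ³` by their formula. -/
def U2div (k : ℕ) : Submodule ℝ (ℝ × ℝ × ℝ → ℝ × ℝ × ℝ) where
  carrier := {w | ∃ p t s χ, U2divBounds k p t s ∧ χ ∈ Qsp (k - 1) (k - 1) (k - 2) (k + 2) ∧
    U2divFun k p t s χ = w}
  zero_mem' := ⟨0, 0, 0, 0, .zero k, zero_mem _, U2divFun_zero k⟩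
  add_mem' := by
    rintro _ _ ⟨p, t, s, χ, hb, hχ, rfl⟩ ⟨p', t', s', χ', hb', hχ', rfl⟩
    exact ⟨_, _, _, _, hb.add hb', add_mem hχ hχ', U2divFun_add ..⟩
  smul_mem' := by
    rintro a _ ⟨p, t, s, χ, hb, hχ, rfl⟩
    exact ⟨_, _, _, _, hb.smul a, Submodule.smul_mem _ a hχ, U2divFun_smul ..⟩

lemma differentiableAt_of_mem_U2div (hw : w ∈ U2div k) {q : ℝ × ℝ × ℝ} (hq : q ∈ PyrInfInt) :
    DifferentiableAt ℝ w q := by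
  obtain ⟨p, t, s, χ, -, hχ, rfl⟩ := hw
  have hz : 1 + q.2.2 ≠ 0 := (add_pos one_pos hq.2.2.2.2).ne'
  exact differentiableAt_U2divFun hz (differentiableAt_of_mem_Qsp hχ hz)

/-- The functions which agree on `Ω∞°` with an element of `div U^{(2),k}_{0,div} + ℝ (1+z)⁻⁴`;
nothing is required outside `Ω∞°`. -/
def divAddConst (k : ℕ) : Submodule ℝ (ℝ × ℝ × ℝ → ℝ) where
  carrier := {u | ∃ w ∈ U2div k, ∃ lam : ℝ, ∀ q ∈ PyrInfInt,
    u q = div3 w q + lam / (1 + q.2.2) ^ 4}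
  zero_mem' := ⟨0, zero_mem _, 0, fun q _ ↦ by simp [div3]⟩
  add_mem' := by
    rintro u u' ⟨w, hw, lam, hu⟩ ⟨w', hw', lam', hu'⟩
    refine ⟨w + w', add_mem hw hw', lam + lam', fun q hq ↦ ?_⟩
    rw [Pi.add_apply, hu q hq, hu' q hq, div3_add (differentiableAt_of_mem_U2div hw hq)
      (differentiableAt_of_mem_U2div hw' hq)]
    ring
  smul_mem' := by
    rintro a u ⟨w, hw, lam, hu⟩
    refine ⟨a • w, Submodule.smul_mem _ a hw, a * lam, fun q hq ↦ ?_⟩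
    rw [Pi.smul_apply, hu q hq, div3_smul a (differentiableAt_of_mem_U2div hw hq), smul_eq_mul]
    ring

lemma mem_divAddConst_of_eqOn (hu : u ∈ divAddConst k) (huv : Set.EqOn v u PyrInfInt) :
    v ∈ divAddConst k := by
  obtain ⟨w, hw, lam, h⟩ := hu
  exact ⟨w, hw, lam, fun q hq ↦ (huv hq).trans (h q hq)⟩

end Spaces

section Existence

/-! ### Existence -/

lemma mem_iff_mem_of_smul_sub_smul_mem {K M : Type*} [DivisionRing K] [AddCommGroup M]
    [Module K M] {V : Submodule K M} {a b : K} {x y : M} (ha : a ≠ 0) (hb : b ≠ 0)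
    (h : a • x - b • y ∈ V) : x ∈ V ↔ y ∈ V := calc
  x ∈ V ↔ a • x ∈ V := (V.smul_mem_iff ha).symm
  _ ↔ b • y ∈ V :=
    ⟨fun hx ↦ (V.sub_mem_iff_right hx).1 h, fun hy ↦ (V.sub_mem_iff_left hy).1 h⟩
  _ ↔ y ∈ V := V.smul_mem_iff hb

variable {k : ℕ}

lemma deriv_mul_mem_divAddConst (hk : 1 ≤ k) {χ : ℝ × ℝ × ℝ → ℝ}
    (hχ : χ ∈ Qsp (k - 1) (k - 1) (k - 2) (k + 2)) :
    (fun q ↦ deriv (fun z ↦ z * χ (q.1, q.2.1, z)) q.2.2) ∈ divAddConst k := by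
  refine ⟨_, ⟨0, 0, 0, χ, .zero k, hχ, rfl⟩, 0, fun q hq ↦ ?_⟩
  have hz : 1 + q.2.2 ≠ 0 := (add_pos one_pos hq.2.2.2.2).ne'
  rw [div3_U2divFun hk 0 0 0 hz (differentiableAt_of_mem_Qsp hχ hz)]
  simp [mixedDeriv, bub1, bub2]

lemma mixedDeriv_mem_divAddConst (hk : 1 ≤ k) {p : MvPolynomial (Fin 2) ℝ} {t s : Polynomial ℝ}
    (hb : U2divBounds k p t s) :
    (fun q ↦ (k - 1) * (q.2.2 ^ (k - 2) / (1 + q.2.2) ^ (k + 2) * mixedDeriv p t s q.1 q.2.1)) ∈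
      divAddConst k := by
  refine ⟨_, ⟨p, t, s, 0, hb, zero_mem _, rfl⟩, 0, fun q hq ↦ ?_⟩
  have hz : 1 + q.2.2 ≠ 0 := (add_pos one_pos hq.2.2.2.2).ne'
  rw [div3_U2divFun hk p t s hz (χ := 0) (differentiableAt_const 0)]
  simp

lemma qmon_four_zero_mem_divAddConst (k : ℕ) : qmon 4 0 0 0 ∈ divAddConst k :=
  ⟨0, zero_mem _, 1, fun q _ ↦ by simp [qmon, div3]⟩

lemma qmon_sub_qmon_succ_mem_divAddConst {a b c j : ℕ} (ha : a < k) (hb : b < k)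
    (hcj : c + 4 ≤ j) (hjk : j ≤ k + 2) :
    (c + 1 : ℝ) • qmon j a b c - (j : ℝ) • qmon (j + 1) a b (c + 1) ∈ divAddConst k := by
  have hχ : qmon j a b c ∈ Qsp (k - 1) (k - 1) (k - 2) (k + 2) :=
    qmon_mem_Qsp (by lia) hjk (by lia) (by lia) (by lia)
  refine mem_divAddConst_of_eqOn (deriv_mul_mem_divAddConst (by lia) hχ) fun q hq ↦ ?_
  have hz : 1 + q.2.2 ≠ 0 := (add_pos one_pos hq.2.2.2.2).ne'
  have hderiv := ((hasDerivAt_pow_div_one_add_pow (c + 1) j hz).const_mul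
    (q.1 ^ a * q.2.1 ^ b)).deriv
  have hmul : (fun z ↦ z * qmon j a b c (q.1, q.2.1, z)) =
      fun z ↦ q.1 ^ a * q.2.1 ^ b * (z ^ (c + 1) / (1 + z) ^ j) := by
    ext z
    simp only [qmon]
    ring
  rw [hmul, hderiv]
  simp only [qmon, Pi.sub_apply, Pi.smul_apply, smul_eq_mul, Nat.cast_add_one, Nat.add_sub_cancel]
  ring

lemma qmon_succ_succ_mem_divAddConst_iff {a b c j : ℕ} (ha : a < k) (hb : b < k)
    (hcj : c + 4 ≤ j) (hjk : j ≤ k + 2) :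
    qmon (j + 1) a b (c + 1) ∈ divAddConst k ↔ qmon j a b c ∈ divAddConst k := by
  refine (mem_iff_mem_of_smul_sub_smul_mem ?_ ?_
    (qmon_sub_qmon_succ_mem_divAddConst ha hb hcj hjk)).symm
  · positivity
  · rw [Nat.cast_ne_zero]
    lia

lemma qmon_succ_zero_mem_divAddConst_iff {a b j : ℕ} (ha : a < k) (hb : b < k)
    (hj : 4 ≤ j) (hjk : j ≤ k + 2) :
    qmon (j + 1) a b 0 ∈ divAddConst k ↔ qmon j a b 0 ∈ divAddConst k := by
  have hj' : (4 : ℝ) ≤ j := mod_cast hj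
  refine mem_iff_mem_of_smul_sub_smul_mem (a := (j : ℝ)) (b := (j : ℝ) - 1) (by positivity)
    (by linarith) ?_
  convert qmon_sub_qmon_succ_mem_divAddConst (c := 0) ha hb hj hjk using 1
  rw [qmon_eq_add (j := j) (by lia) a b 0, Nat.cast_zero]
  module

lemma qmon_mem_divAddConst_iff {a b c j : ℕ} (ha : a < k) (hb : b < k)
    (hcj : c + 4 ≤ j) (hjk : j ≤ k + 3) :
    qmon j a b c ∈ divAddConst k ↔ qmon 4 a b 0 ∈ divAddConst k := by
  induction c generalizing j with
  | zero =>
    induction j, hcj using Nat.le_induction with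
    | base => rfl
    | succ j hj ih => rw [qmon_succ_zero_mem_divAddConst_iff ha hb hj (by lia), ih (by lia)]
  | succ c ih =>
    obtain ⟨j, rfl⟩ : ∃ i, j = i + 1 := ⟨j - 1, by lia⟩
    rw [qmon_succ_succ_mem_divAddConst_iff ha hb (by lia) (by lia), ih (by lia) (by lia)]

end Existence

section PlanarReduction

/-! ### Planar bubbles of monomials -/

open MvPolynomial

/-- The polynomial `T` whose bubble is `x(1-x) T = (x^(n+1) - x)/(n+1)`, a primitive of `x^n` minus
its mean value on `[0,1]`. -/
def monomialBubble (n : ℕ) : Polynomial ℝ :=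
  Polynomial.C (-1 / (n + 1 : ℝ)) * ∑ i ∈ Finset.range n, Polynomial.X ^ i

lemma natDegree_monomialBubble_le (n : ℕ) : (monomialBubble n).natDegree ≤ n - 1 := by
  refine (Polynomial.natDegree_C_mul_le _ _).trans ?_
  refine Polynomial.natDegree_sum_le_of_forall_le _ _ fun i hi ↦ ?_
  rw [Polynomial.natDegree_X_pow]
  have := Finset.mem_range.1 hi
  lia

lemma bub1_monomialBubble (n : ℕ) :
    bub1 (monomialBubble n) =
      Polynomial.C (1 / (n + 1 : ℝ)) * (Polynomial.X ^ (n + 1) - Polynomial.X) := by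
  have h := geom_sum_mul (Polynomial.X : Polynomial ℝ) n
  rw [bub1, monomialBubble, neg_div, Polynomial.C_neg]
  linear_combination Polynomial.C (1 / (n + 1 : ℝ)) * Polynomial.X * h

lemma eval_derivative_bub1_monomialBubble (n : ℕ) (x : ℝ) :
    (Polynomial.derivative (bub1 (monomialBubble n))).eval x = x ^ n - 1 / (n + 1) := by
  have hn : (n + 1 : ℝ) ≠ 0 := by positivity
  simp [bub1_monomialBubble, mul_sub, hn]

lemma bub2_aeval_mul_aeval (T S : Polynomial ℝ) :
    bub2 (Polynomial.aeval (X 0) T * Polynomial.aeval (X 1) S) =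
      Polynomial.aeval (X 0) (bub1 T) * Polynomial.aeval (X 1) (bub1 S) := by
  simp only [bub1, bub2, map_mul, map_sub, map_one, Polynomial.aeval_X]
  ring

lemma mixedDeriv_aeval_mul_aeval (T S : Polynomial ℝ) (α β x y : ℝ) :
    mixedDeriv (Polynomial.aeval (X 0) T * Polynomial.aeval (X 1) S) (β • T) (α • S) x y =
      ((Polynomial.derivative (bub1 T)).eval x + α) *
        ((Polynomial.derivative (bub1 S)).eval y + β) - α * β := by
  simp only [mixedDeriv, bub2_aeval_mul_aeval, Derivation.leibniz, Derivation.map_aeval, pderiv_X,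
    Pi.single_eq_same, smul_eq_mul, mul_one, ne_eq, zero_ne_one, not_false_eq_true,
    Pi.single_eq_of_ne, mul_zero, add_zero, one_ne_zero, zero_add, map_mul, eval_aeval_X_s16,
    Matrix.cons_val_one, Matrix.cons_val_fin_one, Matrix.cons_val_zero, bub1_smul, map_smul,
    Polynomial.eval_smul]
  ring

lemma U2divBounds_aeval_mul_aeval {n : ℕ} {T S : Polynomial ℝ} (hT : T.natDegree ≤ n)
    (hS : S.natDegree ≤ n) (α β : ℝ) :
    U2divBounds (n + 2) (Polynomial.aeval (X 0) T * Polynomial.aeval (X 1) S) (β • T) (α • S) := by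
  refine .of_degree_le ?_ ?_ ((Polynomial.natDegree_smul_le _ _).trans hT)
    ((Polynomial.natDegree_smul_le _ _).trans hS)
  · have := degreeOf_mul_le 0 (Polynomial.aeval (X 0 : MvPolynomial (Fin 2) ℝ) T)
      (Polynomial.aeval (X 1) S)
    have := degreeOf_aeval_X_le (0 : Fin 2) T
    have := degreeOf_aeval_X_of_ne (zero_ne_one' (Fin 2)) S
    lia
  · have := degreeOf_mul_le 1 (Polynomial.aeval (X 0 : MvPolynomial (Fin 2) ℝ) T)
      (Polynomial.aeval (X 1) S)
    have := degreeOf_aeval_X_le (1 : Fin 2) S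
    have := degreeOf_aeval_X_of_ne (zero_ne_one' (Fin 2)).symm T
    lia

lemma qmon_four_mem_divAddConst {k a b : ℕ} (ha : a < k) (hb : b < k) :
    qmon 4 a b 0 ∈ divAddConst k := by
  obtain hk | ⟨n, rfl⟩ : k = 1 ∨ ∃ n, k = n + 2 := by
    rcases k with _ | _ | n
    · lia
    · exact .inl rfl
    · exact .inr ⟨n, rfl⟩
  · obtain ⟨rfl, rfl⟩ : a = 0 ∧ b = 0 := by lia
    exact qmon_four_zero_mem_divAddConst k
  rw [← qmon_mem_divAddConst_iff (c := n) (j := n + 4) ha hb le_rfl (by lia)]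
  have hone : qmon (n + 4) 0 0 n ∈ divAddConst (n + 2) :=
    (qmon_mem_divAddConst_iff (by lia) (by lia) le_rfl (by lia)).2
      (qmon_four_zero_mem_divAddConst (n + 2))
  have hbub := mixedDeriv_mem_divAddConst (by lia) (U2divBounds_aeval_mul_aeval (n := n)
    ((natDegree_monomialBubble_le a).trans (by lia))
    ((natDegree_monomialBubble_le b).trans (by lia)) (1 / (a + 1)) (1 / (b + 1)))
  have hsub : (n + 1 : ℝ) • qmon (n + 4) a b n -
      ((n + 1 : ℝ) * (1 / (a + 1) * (1 / (b + 1)))) • qmon (n + 4) 0 0 n ∈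
        divAddConst (n + 2) := by
    refine mem_divAddConst_of_eqOn hbub fun q _ ↦ ?_
    simp only [mixedDeriv_aeval_mul_aeval, eval_derivative_bub1_monomialBubble, qmon, Pi.sub_apply,
      Pi.smul_apply, smul_eq_mul, Nat.add_sub_cancel]
    push_cast
    ring
  exact (mem_iff_mem_of_smul_sub_smul_mem (by positivity) (by positivity) hsub).2 hone

lemma Qsp_le_divAddConst (k : ℕ) : Qsp (k - 1) (k - 1) (k - 1) (k + 3) ≤ divAddConst k := by
  refine Submodule.span_le.2 ?_
  rintro _ ⟨a, b, c, ha, hb, hc, rfl⟩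
  have hak : a < k := by lia
  have hbk : b < k := by lia
  exact (qmon_mem_divAddConst_iff hak hbk (by lia) le_rfl).2 (qmon_four_mem_divAddConst hak hbk)

end PlanarReduction

section Uniqueness

/-! ### Uniqueness -/

lemma eq_zero_of_hasDerivAt_mul {f ω : ℝ → ℝ} {c : ℝ} (h0 : Tendsto f (𝓝[>] 0) (𝓝 0))
    (htop : Tendsto f atTop (𝓝 0)) (hω : ∀ z > 0, ω z ≠ 0)
    (hf : ∀ z > 0, HasDerivAt f (ω z * c) z) : c = 0 := by
  obtain ⟨z, hz, h⟩ := exists_hasDerivAt_eq_zero_of_tendsto_atTop h0 htop hf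
  exact (mul_eq_zero.1 h).resolve_left (hω z hz)

lemma eqOn_zero_of_hasDerivAt_zero {f : ℝ → ℝ} (h0 : Tendsto f (𝓝[>] 0) (𝓝 0))
    (hf : ∀ z > 0, HasDerivAt f 0 z) : Set.EqOn f 0 (Set.Ioi 0) := by
  intro z hz
  have hconst : f =ᶠ[𝓝[>] 0] fun _ ↦ f z := by
    filter_upwards [self_mem_nhdsWithin] with y hy
    exact isOpen_Ioi.is_const_of_deriv_eq_zero isPreconnected_Ioi
      (fun x hx ↦ (hf x hx).differentiableAt.differentiableWithinAt)
      (fun x hx ↦ (hf x hx).deriv) hy hz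
  exact tendsto_nhds_unique (tendsto_const_nhds.congr' hconst.symm) h0

lemma eval_zero_bub1 (t : Polynomial ℝ) : (bub1 t).eval 0 = 0 := by simp [bub1]

lemma eval_one_bub1 (t : Polynomial ℝ) : (bub1 t).eval 1 = 0 := by simp [bub1]

lemma exists_eval_derivative_bub1_eq_zero (t : Polynomial ℝ) :
    ∃ x ∈ Set.Ioo (0 : ℝ) 1, (Polynomial.derivative (bub1 t)).eval x = 0 :=
  exists_hasDerivAt_eq_zero one_pos (bub1 t).continuousOn
    ((eval_zero_bub1 t).trans (eval_one_bub1 t).symm) fun x _ ↦ (bub1 t).hasDerivAt x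

lemma eq_zero_of_derivative_bub1_eqOn_zero {t : Polynomial ℝ}
    (ht : ∀ x ∈ Set.Ioo (0 : ℝ) 1, (Polynomial.derivative (bub1 t)).eval x = 0) : t = 0 := by
  have hderiv : Polynomial.derivative (bub1 t) = 0 :=
    Polynomial.eq_zero_of_infinite_isRoot _ ((Set.Ioo_infinite one_pos).mono ht)
  have hC := Polynomial.eq_C_of_derivative_eq_zero hderiv
  have hroot := eval_zero_bub1 t
  rw [hC, Polynomial.eval_C] at hroot
  rwa [hroot, Polynomial.C_0, bub1_eq_zero_iff] at hC

open MvPolynomial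

lemma eq_zero_of_pderiv_pderiv_bub2_eqOn_zero {p : MvPolynomial (Fin 2) ℝ}
    (hp : ∀ x ∈ Set.Ioo (0 : ℝ) 1, ∀ y ∈ Set.Ioo (0 : ℝ) 1,
      eval ![x, y] (pderiv 0 (pderiv 1 (bub2 p))) = 0) : p = 0 := by
  have hmixed : pderiv 0 (pderiv 1 (bub2 p)) = 0 := by
    refine funext_set (fun _ ↦ Set.Ioo 0 1) (fun _ ↦ Set.Ioo_infinite one_pos) fun v hv ↦ ?_
    have hvec : v = ![v 0, v 1] := by ext i; fin_cases i <;> rfl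
    rw [hvec, hp _ (hv 0 trivial) _ (hv 1 trivial), map_zero]
  have hpderiv : pderiv 1 (bub2 p) = 0 := by
    refine eq_zero_of_pderiv_eq_zero hmixed fun v hv ↦ ?_
    simp [bub2, hv, pderiv_X]
  exact bub2_eq_zero_iff.1 (eq_zero_of_pderiv_eq_zero hpderiv fun v hv ↦ by simp [bub2, hv])

lemma exists_mixedDeriv_eq_eval_right (p : MvPolynomial (Fin 2) ℝ) (t s : Polynomial ℝ) (y : ℝ) :
    ∃ x ∈ Set.Ioo (0 : ℝ) 1, mixedDeriv p t s x y = (Polynomial.derivative (bub1 s)).eval y := by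
  have hderiv (x : ℝ) := (hasDerivAt_eval_left (pderiv 1 (bub2 p)) x y).fun_add
    ((bub1 t).hasDerivAt x)
  obtain ⟨x, hx, h⟩ := exists_hasDerivAt_eq_zero one_pos
    (fun x _ ↦ (hderiv x).continuousAt.continuousWithinAt) (by simp [bub2, bub1, pderiv_X])
    fun x _ ↦ hderiv x
  exact ⟨x, hx, by rw [mixedDeriv]; linarith⟩

lemma exists_mixedDeriv_eq_eval_left (p : MvPolynomial (Fin 2) ℝ) (t s : Polynomial ℝ) (x : ℝ) :
    ∃ y ∈ Set.Ioo (0 : ℝ) 1, mixedDeriv p t s x y = (Polynomial.derivative (bub1 t)).eval x := by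
  have hderiv (y : ℝ) := (hasDerivAt_eval_right (pderiv 0 (bub2 p)) x y).fun_add
    ((bub1 s).hasDerivAt y)
  obtain ⟨y, hy, h⟩ := exists_hasDerivAt_eq_zero one_pos
    (fun y _ ↦ (hderiv y).continuousAt.continuousWithinAt) (by simp [bub2, bub1, pderiv_X])
    fun y _ ↦ hderiv y
  exact ⟨y, hy, by rw [mixedDeriv, pderiv_pderiv_comm 0 1]; linarith⟩

lemma eq_zero_of_mixedDeriv_eq_const {p : MvPolynomial (Fin 2) ℝ} {t s : Polynomial ℝ} {d : ℝ}
    (h : ∀ x ∈ Set.Ioo (0 : ℝ) 1, ∀ y ∈ Set.Ioo (0 : ℝ) 1, mixedDeriv p t s x y = d) :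
    p = 0 ∧ t = 0 ∧ s = 0 := by
  have hs : ∀ y ∈ Set.Ioo (0 : ℝ) 1, (Polynomial.derivative (bub1 s)).eval y = d := fun y hy ↦ by
    obtain ⟨x, hx, hxy⟩ := exists_mixedDeriv_eq_eval_right p t s y
    rw [← hxy, h x hx y hy]
  have ht : ∀ x ∈ Set.Ioo (0 : ℝ) 1, (Polynomial.derivative (bub1 t)).eval x = d := fun x hx ↦ by
    obtain ⟨y, hy, hxy⟩ := exists_mixedDeriv_eq_eval_left p t s x
    rw [← hxy, h x hx y hy]
  obtain rfl : d = 0 := by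
    obtain ⟨y, hy, hzero⟩ := exists_eval_derivative_bub1_eq_zero s
    rw [← hs y hy, hzero]
  refine ⟨eq_zero_of_pderiv_pderiv_bub2_eqOn_zero fun x hx y hy ↦ ?_,
    eq_zero_of_derivative_bub1_eqOn_zero ht, eq_zero_of_derivative_bub1_eqOn_zero hs⟩
  simpa [mixedDeriv, hs y hy, ht x hx] using h x hx y hy

variable {k : ℕ} {p : MvPolynomial (Fin 2) ℝ} {t s : Polynomial ℝ} {χ : ℝ × ℝ × ℝ → ℝ} {lam : ℝ}

lemma hasDerivAt_mul_of_div3_add_eq_zero (hk : 1 ≤ k)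
    (hχ : χ ∈ Qsp (k - 1) (k - 1) (k - 2) (k + 2)) {x y z : ℝ} (hz : 1 + z ≠ 0)
    (h : div3 (U2divFun k p t s χ) (x, y, z) + lam / (1 + z) ^ 4 = 0) :
    HasDerivAt (fun z ↦ z * χ (x, y, z))
      (-((k - 1) * (z ^ (k - 2) / (1 + z) ^ (k + 2) * mixedDeriv p t s x y) +
        lam / (1 + z) ^ 4)) z := by
  rw [div3_U2divFun hk p t s hz (differentiableAt_of_mem_Qsp hχ hz)] at h
  refine (differentiableAt_mul_of_mem_Qsp hχ x y hz).hasDerivAt.congr_deriv ?_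
  linarith

lemma mixedDeriv_eq_of_div3_add_eq_zero (hk : 2 ≤ k)
    (hχ : χ ∈ Qsp (k - 1) (k - 1) (k - 2) (k + 2))
    (h : ∀ q ∈ PyrInfInt, div3 (U2divFun k p t s χ) q + lam / (1 + q.2.2) ^ 4 = 0)
    {x y x' y' : ℝ} (hx : x ∈ Set.Ioo 0 1) (hy : y ∈ Set.Ioo 0 1) (hx' : x' ∈ Set.Ioo 0 1)
    (hy' : y' ∈ Set.Ioo 0 1) : mixedDeriv p t s x y = mixedDeriv p t s x' y' := by
  have hk' : (2 : ℝ) ≤ k := mod_cast hk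
  have hzero : (1 - k : ℝ) * (mixedDeriv p t s x y - mixedDeriv p t s x' y') = 0 := by
    refine eq_zero_of_hasDerivAt_mul
      (f := fun z ↦ z * χ (x, y, z) - z * χ (x', y', z))
      (ω := fun z ↦ z ^ (k - 2) / (1 + z) ^ (k + 2)) ?_ ?_ (fun z hz ↦ by positivity)
      fun z hz ↦ ?_
    · simpa using (tendsto_mul_nhdsGT_zero_of_mem_Qsp hχ x y).sub
        (tendsto_mul_nhdsGT_zero_of_mem_Qsp hχ x' y')
    · simpa using (tendsto_mul_atTop_of_mem_Qsp (by lia) hχ x y).sub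
        (tendsto_mul_atTop_of_mem_Qsp (by lia) hχ x' y')
    · have hz' : 1 + z ≠ 0 := (add_pos one_pos hz).ne'
      refine ((hasDerivAt_mul_of_div3_add_eq_zero (by lia) hχ hz'
        (h _ ⟨hx.1, hx.2, hy.1, hy.2, hz⟩)).fun_sub
        (hasDerivAt_mul_of_div3_add_eq_zero (by lia) hχ hz'
        (h _ ⟨hx'.1, hx'.2, hy'.1, hy'.2, hz⟩))).congr_deriv ?_
      ring
  exact sub_eq_zero.1 ((mul_eq_zero.1 hzero).resolve_left (by linarith))

lemma planarData_eq_zero_of_div3_add_eq_zero (hb : U2divBounds k p t s)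
    (hχ : χ ∈ Qsp (k - 1) (k - 1) (k - 2) (k + 2))
    (h : ∀ q ∈ PyrInfInt, div3 (U2divFun k p t s χ) q + lam / (1 + q.2.2) ^ 4 = 0) :
    p = 0 ∧ t = 0 ∧ s = 0 := by
  obtain hk' | hk' := lt_or_ge k 2
  · exact hb.eq_zero hk'
  · have hhalf : (1 / 2 : ℝ) ∈ Set.Ioo 0 1 := by norm_num
    exact eq_zero_of_mixedDeriv_eq_const fun x hx y hy ↦
      mixedDeriv_eq_of_div3_add_eq_zero hk' hχ h hx hy hhalf hhalf

lemma eqOn_zero_of_div3_add_eq_zero (hk : 1 ≤ k) {w : ℝ × ℝ × ℝ → ℝ × ℝ × ℝ}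
    (hw : w ∈ U2div k) (h : ∀ q ∈ PyrInfInt, div3 w q + lam / (1 + q.2.2) ^ 4 = 0) :
    lam = 0 ∧ Set.EqOn w 0 PyrInfInt := by
  obtain ⟨p, t, s, χ, hb, hχ, rfl⟩ := hw
  obtain ⟨rfl, rfl, rfl⟩ := planarData_eq_zero_of_div3_add_eq_zero hb hχ h
  have hderiv {x y z : ℝ} (hq : (x, y, z) ∈ PyrInfInt) :
      HasDerivAt (fun z ↦ z * χ (x, y, z)) (1 / (1 + z) ^ 4 * -lam) z :=
    (hasDerivAt_mul_of_div3_add_eq_zero hk hχ (add_pos one_pos hq.2.2.2.2).ne' (h _ hq)).congr_deriv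
      (by simp [mixedDeriv, bub1, bub2, div_eq_inv_mul])
  have hlam : lam = 0 := by
    refine neg_eq_zero.1 (eq_zero_of_hasDerivAt_mul
      (tendsto_mul_nhdsGT_zero_of_mem_Qsp hχ (1 / 2) (1 / 2))
      (tendsto_mul_atTop_of_mem_Qsp (by lia) hχ (1 / 2) (1 / 2)) ?_
      fun z hz ↦ hderiv ⟨?_, ?_, ?_, ?_, hz⟩)
    · intro z hz
      positivity
    all_goals norm_num
  refine ⟨hlam, fun ⟨x, y, z⟩ hq ↦ ?_⟩
  have hzero : z * χ (x, y, z) = 0 := eqOn_zero_of_hasDerivAt_zero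
    (tendsto_mul_nhdsGT_zero_of_mem_Qsp hχ x y)
    (fun z hz ↦ by simpa [hlam] using hderiv (z := z) ⟨hq.1, hq.2.1, hq.2.2.1, hq.2.2.2.1, hz⟩)
    hq.2.2.2.2
  simp [U2divFun, bub1, bub2, hzero]

end Uniqueness

/-- every `u ∈ Q^{k−1,k−1,k−1}_{k+3} = U^{(3),k}(Ω∞)` can be written,
uniquely, as `u = div w + λ/(1+z)⁴` on `Ω∞°` with `w ∈ U^{(2),k}_{0,div}(Ω∞)` and
`λ ∈ ℝ`. -/
theorem U3_decomposition (k : ℕ) (hk : 1 ≤ k)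
    (u : (ℝ × ℝ × ℝ) → ℝ)
    (hu : u ∈ Qsp ((k : ℤ) - 1) ((k : ℤ) - 1) ((k : ℤ) - 1) (k + 3)) :
    (∃ p : MvPolynomial (Fin 2) ℝ, ∃ t s : Polynomial ℝ, ∃ χ : (ℝ × ℝ × ℝ) → ℝ,
     ∃ lam : ℝ,
       U2divBounds k p t s ∧
       χ ∈ Qsp ((k : ℤ) - 1) ((k : ℤ) - 1) ((k : ℤ) - 2) (k + 2) ∧
       ∀ q ∈ PyrInfInt,
         u q = div3 (U2divFun k p t s χ) q + lam / (1 + q.2.2) ^ 4) ∧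
    (∀ p p' : MvPolynomial (Fin 2) ℝ, ∀ t s t' s' : Polynomial ℝ,
     ∀ χ χ' : (ℝ × ℝ × ℝ) → ℝ, ∀ lam lam' : ℝ,
       U2divBounds k p t s → U2divBounds k p' t' s' →
       χ ∈ Qsp ((k : ℤ) - 1) ((k : ℤ) - 1) ((k : ℤ) - 2) (k + 2) →
       χ' ∈ Qsp ((k : ℤ) - 1) ((k : ℤ) - 1) ((k : ℤ) - 2) (k + 2) →
       (∀ q ∈ PyrInfInt,
         u q = div3 (U2divFun k p t s χ) q + lam / (1 + q.2.2) ^ 4) →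
       (∀ q ∈ PyrInfInt,
         u q = div3 (U2divFun k p' t' s' χ') q + lam' / (1 + q.2.2) ^ 4) →
       lam = lam' ∧ ∀ q ∈ PyrInfInt, U2divFun k p t s χ q = U2divFun k p' t' s' χ' q) := by
  refine ⟨?_, ?_⟩
  · obtain ⟨_, ⟨p, t, s, χ, hb, hχ, rfl⟩, lam, h⟩ := Qsp_le_divAddConst k hu
    exact ⟨p, t, s, χ, lam, hb, hχ, h⟩
  · intro p p' t s t' s' χ χ' lam lam' hb hb' hχ hχ' h h'
    have hw : U2divFun k p t s χ ∈ U2div k := ⟨p, t, s, χ, hb, hχ, rfl⟩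
    have hw' : U2divFun k p' t' s' χ' ∈ U2div k := ⟨p', t', s', χ', hb', hχ', rfl⟩
    obtain ⟨hlam, hzero⟩ := eqOn_zero_of_div3_add_eq_zero (lam := lam - lam') hk
      (sub_mem hw hw') fun q hq ↦ by
        rw [div3_sub (differentiableAt_of_mem_U2div hw hq) (differentiableAt_of_mem_U2div hw' hq),
          sub_div]
        linarith [h q hq, h' q hq]
    exact ⟨sub_eq_zero.1 hlam, fun q hq ↦ sub_eq_zero.1 (hzero hq)⟩

end
end
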